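/- arXiv:1411.4545 — 4 statements merged into one kernel-verified Lean document; each statement's English description precedes it below -/
import Mathlib

section
/- Let q be a prime and let χ be an even (χ(−1) = 1) nontrivial Dirichlet character modulo q. Then L(1/2, χ̄) = Σ_{m≥1} χ̄(m) m^{−1/2} V₁(m/√q) + (τ(χ̄)/√q) · Σ_{m≥1} χ(m) m^{−1/2} V₁(m/√q), where both series on the right-hand side converge absolutely. -/
/-!
By Mellin inversion `V₁(m/√q) / √m` is a constant multiple of the exponential integral
`∫_1^∞ v^{-3/4} e^{-π m² v / q} dv`. The completed `L`-function is the Mellin transform of the theta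
series `∑_n χ(n) e^{-π n² x / q}`. Splitting this transform at `x = 1` and folding `(0, 1)` onto
`(1, ∞)` by the functional equation of the theta series, in which `χ` is replaced by its discrete
Fourier transform, leaves two integrals over `(1, ∞)`. Integrated termwise at `s = 1/2`, they are
the two series; the discrete Fourier transform of a primitive even `χ` is `τ(χ) χ̄`.
-/

open Complex

/-- The weight function `V₁` from the approximate functional equation for `L(1/2, χ)`:
`V₁(x) = (1/2πi) ∫_(1) (√π x)^{-s} Γ((2s+1)/4)/Γ(1/4) ds/s`, the integral taken
along the vertical line `Re s = 1`. -/
noncomputable def V₁ (x : ℝ) : ℂ :=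
  (1 / (2 * Real.pi)) * ∫ t : ℝ,
    (((Real.sqrt Real.pi * x : ℝ) : ℂ) ^ (-(1 + t * I))) *
      (Complex.Gamma ((2 * (1 + t * I) + 1) / 4) / Complex.Gamma (1 / 4)) *
      (1 + t * I)⁻¹

/-- The Gauss sum `τ(χ) = ∑_{a mod q} χ(a) e(a/q)` of a Dirichlet character mod `q`. -/
noncomputable def gaussSumE {q : ℕ} [NeZero q] (χ : DirichletCharacter ℂ q) : ℂ :=
  ∑ a : ZMod q, χ a * Complex.exp (2 * Real.pi * I * a.val / q)

section

open MeasureTheory Set Filter Topology HurwitzZeta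
open scoped ZMod

section Mellin

variable {E : Type*} [NormedAddCommGroup E] [NormedSpace ℂ E]

lemma mellin_indicator {S : Set ℝ} (hS : MeasurableSet S) (hS₀ : S ⊆ Ioi 0) (f : ℝ → E) (s : ℂ) :
    mellin (S.indicator f) s = ∫ x in S, (x : ℂ) ^ (s - 1) • f x := by
  simp only [mellin, ← indicator_smul_apply _ (fun x : ℝ ↦ (x : ℂ) ^ (s - 1)) f]
  rw [setIntegral_indicator hS, inter_eq_self_of_subset_right hS₀]

lemma setIntegral_Ioo_cpow_smul_eq_setIntegral_Ioi (f : ℝ → E) (s : ℂ) :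
    ∫ x in Ioo (0 : ℝ) 1, (x : ℂ) ^ (s - 1) • f x =
      ∫ x in Ioi (1 : ℝ), (x : ℂ) ^ (-s - 1) • f x⁻¹ := by
  have hinv : (fun x : ℝ ↦ (Ioo 0 1).indicator f x⁻¹) = (Ioi 1).indicator fun x ↦ f x⁻¹ := by
    funext x
    simp only [indicator, mem_Ioo, mem_Ioi, ← one_lt_inv_iff₀, inv_inv]
  rw [← mellin_indicator measurableSet_Ioo Ioo_subset_Ioi_self,
    ← mellin_indicator measurableSet_Ioi (Ioi_subset_Ioi zero_le_one), ← hinv, mellin_comp_inv,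
    neg_neg]

lemma strongFEPair_Λ_eq_integral_Ioi_one_add {P : WeakFEPair E} (hP : IsStrongFEPair P) (s : ℂ) :
    P.Λ s = (∫ x in Ioi (1 : ℝ), (x : ℂ) ^ (s - 1) • P.f x) +
      P.ε • ∫ x in Ioi (1 : ℝ), (x : ℂ) ^ (P.k - s - 1) • P.g x := by
  have hint : MellinConvergent P.f s := (hP.hasMellin s).1
  have hreflect {x : ℝ} (hx : x ∈ Ioi 1) : (x : ℂ) ^ (-s - 1) • P.f x⁻¹ =
      P.ε • (x : ℂ) ^ (P.k - s - 1) • P.g x := by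
    have hx₀ : 0 < x := one_pos.trans hx
    rw [← one_div, P.h_feq x hx₀, smul_smul, smul_smul, ofReal_cpow hx₀.le,
      sub_sub (P.k : ℂ), sub_eq_add_neg (P.k : ℂ), neg_add', cpow_add _ _ (mod_cast hx₀.ne')]
    ring_nf
  rw [hP.Λ_eq, mellin, ← Ioc_union_Ioi_eq_Ioi zero_le_one,
    setIntegral_union (Ioc_disjoint_Ioi le_rfl) measurableSet_Ioi
      (hint.mono_set Ioc_subset_Ioi_self) (hint.mono_set (Ioi_subset_Ioi zero_le_one)),
    integral_Ioc_eq_integral_Ioo, setIntegral_Ioo_cpow_smul_eq_setIntegral_Ioi, add_comm,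
    setIntegral_congr_fun measurableSet_Ioi fun x ↦ hreflect, integral_smul]

lemma hasMellin_cpow_Ioi (a : ℂ) {s : ℂ} (hs : s.re + a.re < 0) :
    HasMellin ((Ioi 1).indicator fun t ↦ (t : ℂ) ^ a : ℝ → ℂ) s (-1 / (s + a)) := by
  have hpow {t : ℝ} (ht : t ∈ Ioi 1) : (t : ℂ) ^ (s - 1) • (t : ℂ) ^ a = (t : ℂ) ^ (s + a - 1) := by
    rw [smul_eq_mul, ← cpow_add _ _ (mod_cast (one_pos.trans ht).ne'), sub_add_eq_add_sub]
  have hre : (s + a - 1).re < -1 := by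
    rw [sub_re, add_re, one_re]; linarith
  constructor
  · simp only [MellinConvergent,
      ← indicator_smul_apply _ (fun t : ℝ ↦ (t : ℂ) ^ (s - 1)) fun t : ℝ ↦ (t : ℂ) ^ a]
    rw [integrableOn_indicator_iff measurableSet_Ioi,
      inter_eq_self_of_subset_left (Ioi_subset_Ioi zero_le_one)]
    exact (integrableOn_Ioi_cpow_of_lt hre one_pos).congr_fun (fun t ht ↦ (hpow ht).symm)
      measurableSet_Ioi
  · rw [mellin_indicator measurableSet_Ioi (Ioi_subset_Ioi zero_le_one),
      setIntegral_congr_fun measurableSet_Ioi fun t ↦ hpow, integral_Ioi_cpow_of_lt hre one_pos]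
    simp

lemma integral_norm_cpow_smul_comp_mul (f : ℝ → E) (s : ℂ) {v : ℝ} (hv : 0 < v) :
    ∫ x in Ioi (0 : ℝ), ‖(x : ℂ) ^ (s - 1) • f (x * v)‖ =
      v ^ (-s.re) * ∫ x in Ioi (0 : ℝ), ‖(x : ℂ) ^ (s - 1) • f x‖ := by
  have hnorm {x : ℝ} (hx : x ∈ Ioi 0) : ‖(x : ℂ) ^ (s - 1) • f (x * v)‖ =
      v ^ (1 - s.re) * ‖((x * v : ℝ) : ℂ) ^ (s - 1) • f (x * v)‖ := by
    rw [mem_Ioi] at hx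
    rw [norm_smul, norm_smul, norm_cpow_eq_rpow_re_of_pos hx,
      norm_cpow_eq_rpow_re_of_pos (mul_pos hx hv), Real.mul_rpow hx.le hv.le, sub_re, one_re,
      ← neg_sub s.re 1, Real.rpow_neg hv.le]
    field_simp [(Real.rpow_pos_of_pos hv (s.re - 1)).ne']
  rw [setIntegral_congr_fun measurableSet_Ioi fun x ↦ hnorm, integral_const_mul,
    integral_comp_mul_right_Ioi (fun x : ℝ ↦ ‖(x : ℂ) ^ (s - 1) • f x‖) 0 hv, zero_mul,
    smul_eq_mul, ← mul_assoc, sub_eq_neg_add, Real.rpow_add_one hv.ne',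
    mul_inv_cancel_right₀ hv.ne']

theorem hasMellin_setIntegral_smul_comp_mul [CompleteSpace E] {K : ℝ → ℂ} {f : ℝ → E} {s : ℂ}
    (hKm : StronglyMeasurable K) (hfm : StronglyMeasurable f)
    (hK : MellinConvergent K (1 - s)) (hf : MellinConvergent f s) :
    HasMellin (fun x ↦ ∫ v in Ioi (0 : ℝ), K v • f (x * v)) s
      (mellin K (1 - s) • mellin f s) := by
  let G : ℝ × ℝ → E := fun p ↦ K p.2 • (p.1 : ℂ) ^ (s - 1) • f (p.1 * p.2)
  have hGm : StronglyMeasurable G :=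
    (hKm.comp_measurable measurable_snd).smul
      (((measurable_ofReal.comp measurable_fst).pow_const _).stronglyMeasurable.smul
        (hfm.comp_measurable (measurable_fst.mul measurable_snd)))
  have hGv {v : ℝ} (hv : v ∈ Ioi 0) :
      Integrable (fun x ↦ G (x, v)) (volume.restrict (Ioi 0)) := by
    simp only [G, mul_comm _ v]
    exact ((MellinConvergent.comp_mul_left hv).2 hf).smul (K v)
  have hGv_integral {v : ℝ} (hv : v ∈ Ioi 0) :
      ∫ x in Ioi (0 : ℝ), G (x, v) = ((v : ℂ) ^ (1 - s - 1) • K v) • mellin f s := by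
    simp only [G]
    rw [integral_smul, ← mellin, mellin_comp_mul_right f s hv, smul_smul, smul_eq_mul, mul_comm,
      sub_sub_cancel_left]
  have hGv_norm {v : ℝ} (hv : v ∈ Ioi 0) : ∫ x in Ioi (0 : ℝ), ‖G (x, v)‖ =
      ‖(v : ℂ) ^ (1 - s - 1) • K v‖ * ∫ x in Ioi (0 : ℝ), ‖(x : ℂ) ^ (s - 1) • f x‖ := by
    simp only [G, norm_smul (K v)]
    rw [integral_const_mul, integral_norm_cpow_smul_comp_mul f s hv, norm_smul,
      norm_cpow_eq_rpow_re_of_pos hv, sub_sub_cancel_left, neg_re]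
    ring
  have hG : Integrable G ((volume.restrict (Ioi 0)).prod (volume.restrict (Ioi 0))) := by
    rw [integrable_prod_iff' hGm.aestronglyMeasurable]
    exact ⟨ae_restrict_of_forall_mem measurableSet_Ioi fun v ↦ hGv,
      (hK.norm.mul_const _).congr
        (ae_restrict_of_forall_mem measurableSet_Ioi fun v hv ↦ (hGv_norm hv).symm)⟩
  have hGx (x : ℝ) : (x : ℂ) ^ (s - 1) • ∫ v in Ioi (0 : ℝ), K v • f (x * v) =
      ∫ v in Ioi (0 : ℝ), G (x, v) := by
    simp only [G, ← integral_smul, smul_comm (K _)]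
  constructor
  · exact hG.integral_prod_left.congr (.of_forall fun x ↦ (hGx x).symm)
  · rw [mellin, integral_congr_ae (.of_forall hGx), integral_integral_swap hG,
      setIntegral_congr_fun measurableSet_Ioi fun v ↦ hGv_integral, integral_smul_const]
    rfl

end Mellin

section ExpIntegral

/-- The generalized exponential integral `E_p(y) = ∫_1^∞ e^{-yv} v^{-p} dv`, for complex order `p`.
It is the inverse Mellin transform of `Γ(s) / (s + p - 1)`. -/
noncomputable def expIntegral (p : ℂ) (y : ℝ) : ℂ :=
  ∫ v in Ioi (1 : ℝ), (v : ℂ) ^ (-p) * Real.exp (-(y * v))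

lemma norm_cpow_mul_exp_neg {v : ℝ} (hv : 0 < v) (p : ℂ) (y : ℝ) :
    ‖(v : ℂ) ^ (-p) * Real.exp (-(y * v))‖ = v ^ (-p.re) * Real.exp (-(y * v)) := by
  rw [norm_mul, norm_cpow_eq_rpow_re_of_pos hv, neg_re, norm_real, Real.norm_eq_abs, Real.abs_exp]

lemma measurable_cpow_mul_exp_neg (p : ℂ) (y : ℝ) :
    Measurable fun v : ℝ ↦ (v : ℂ) ^ (-p) * Real.exp (-(y * v)) := by
  fun_prop

lemma integrableOn_cpow_mul_exp_neg_Ioi (p : ℂ) {y : ℝ} (hy : 0 < y) :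
    IntegrableOn (fun v : ℝ ↦ (v : ℂ) ^ (-p) * Real.exp (-(y * v))) (Ioi 1) := by
  have hbound : (fun v : ℝ ↦ v ^ (-p.re) * Real.exp (-(y * v))) =O[atTop]
      fun v ↦ Real.exp (-(y / 2) * v) := by
    have := ((isLittleO_rpow_exp_pos_mul_atTop (-p.re) (half_pos hy)).isBigO.mul
      (Asymptotics.isBigO_refl (fun v ↦ Real.exp (-(y * v))) atTop))
    refine this.congr_right fun v ↦ ?_
    rw [← Real.exp_add]
    ring_nf
  have hcont : ContinuousOn (fun v : ℝ ↦ v ^ (-p.re) * Real.exp (-(y * v))) (Ici 1) :=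
    (continuousOn_id.rpow_const fun v hv ↦ .inl (one_pos.trans_le hv).ne').mul (by fun_prop)
  refine (integrable_of_isBigO_exp_neg (half_pos hy) hcont hbound).mono'
    (measurable_cpow_mul_exp_neg p y).aestronglyMeasurable
    (ae_restrict_of_forall_mem measurableSet_Ioi fun v hv ↦ ?_)
  exact (norm_cpow_mul_exp_neg (one_pos.trans hv) p y).le

lemma integral_norm_cpow_mul_exp_neg_le (p : ℂ) {y₀ y : ℝ} (hy₀ : 0 < y₀) (hy : y₀ ≤ y) :
    ∫ v in Ioi (1 : ℝ), ‖(v : ℂ) ^ (-p) * Real.exp (-(y * v))‖ ≤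
      Real.exp (y₀ - y) * ∫ v in Ioi (1 : ℝ), ‖(v : ℂ) ^ (-p) * Real.exp (-(y₀ * v))‖ := by
  rw [← integral_const_mul]
  refine setIntegral_mono_on (integrableOn_cpow_mul_exp_neg_Ioi p (hy₀.trans_le hy)).norm
    ((integrableOn_cpow_mul_exp_neg_Ioi p hy₀).norm.const_mul _) measurableSet_Ioi fun v hv ↦ ?_
  have hv₀ : 0 < v := one_pos.trans hv
  rw [norm_cpow_mul_exp_neg hv₀, norm_cpow_mul_exp_neg hv₀, mul_left_comm, ← Real.exp_add]
  gcongr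
  nlinarith [mem_Ioi.1 hv]

lemma summable_integral_norm_cpow_mul_exp_neg (p : ℂ) {c : ℝ} (hc : 0 < c) :
    Summable fun n : ℕ ↦
      ∫ v in Ioi (1 : ℝ), ‖(v : ℂ) ^ (-p) * Real.exp (-(c * (n + 1 : ℕ) ^ 2 * v))‖ := by
  have hexp := (Real.summable_exp_nat_mul_iff.2 (neg_lt_zero.2 hc)).mul_right
    (∫ v in Ioi (1 : ℝ), ‖(v : ℂ) ^ (-p) * Real.exp (-(c * v))‖)
  refine hexp.of_nonneg_of_le (fun n ↦ integral_nonneg fun v ↦ norm_nonneg _) fun n ↦ ?_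
  have hn : (n : ℝ) + 1 ≤ (n + 1 : ℕ) ^ 2 := by push_cast; nlinarith [n.cast_nonneg (α := ℝ)]
  refine (integral_norm_cpow_mul_exp_neg_le p hc ?_).trans ?_
  · exact le_mul_of_one_le_right hc.le (by linarith [n.cast_nonneg (α := ℝ)])
  · gcongr
    nlinarith

lemma summable_norm_mul_expIntegral {a : ℕ → ℂ} {B : ℝ} (ha : ∀ n, ‖a n‖ ≤ B) (p : ℂ) {c : ℝ}
    (hc : 0 < c) : Summable fun n : ℕ ↦ ‖a n * expIntegral p (c * (n + 1 : ℕ) ^ 2)‖ := by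
  refine ((summable_integral_norm_cpow_mul_exp_neg p hc).mul_left B).of_nonneg_of_le
    (fun n ↦ norm_nonneg _) fun n ↦ ?_
  rw [norm_mul]
  exact mul_le_mul (ha n) (norm_integral_le_integral_norm _) (norm_nonneg _)
    ((norm_nonneg _).trans (ha n))

lemma continuousAt_expIntegral (p : ℂ) {y : ℝ} (hy : 0 < y) : ContinuousAt (expIntegral p) y := by
  refine continuousAt_of_dominated
    (.of_forall fun z ↦ (measurable_cpow_mul_exp_neg p z).aestronglyMeasurable) ?_
    (integrableOn_cpow_mul_exp_neg_Ioi p (half_pos hy)).norm (.of_forall fun v ↦ by fun_prop)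
  filter_upwards [lt_mem_nhds (half_lt_self hy)] with z hz
  filter_upwards [ae_restrict_mem measurableSet_Ioi] with v hv
  have hv₀ : 0 < v := one_pos.trans hv
  rw [norm_cpow_mul_exp_neg hv₀, norm_cpow_mul_exp_neg hv₀]
  gcongr

theorem hasMellin_expIntegral {p s : ℂ} (hs : 0 < s.re) (hps : 1 - p.re < s.re) :
    HasMellin (expIntegral p) s (Gamma s / (s + p - 1)) := by
  let K : ℝ → ℂ := (Ioi 1).indicator fun v : ℝ ↦ (v : ℂ) ^ (-p)
  let f : ℝ → ℂ := fun x ↦ Real.exp (-x)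
  have hK : HasMellin K (1 - s) (-1 / (1 - s + -p)) :=
    hasMellin_cpow_Ioi (-p) (by simp only [sub_re, one_re, neg_re]; linarith)
  have hf : MellinConvergent f s := by
    refine (GammaIntegral_convergent hs).congr_fun (fun x _ ↦ ?_) measurableSet_Ioi
    simp only [f, smul_eq_mul, mul_comm]
  have hmellin : mellin f s = Gamma s := by
    rw [Gamma_eq_integral hs, GammaIntegral_eq_mellin]
  have hconv : expIntegral p = fun x ↦ ∫ v in Ioi (0 : ℝ), K v • f (x * v) := by
    funext x
    simp only [K, f, ← indicator_smul_apply_left (Ioi 1) (fun v : ℝ ↦ (v : ℂ) ^ (-p))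
      fun v ↦ (Real.exp (-(x * v)) : ℂ)]
    rw [setIntegral_indicator measurableSet_Ioi,
      inter_eq_self_of_subset_right (Ioi_subset_Ioi zero_le_one)]
    rfl
  have h := hasMellin_setIntegral_smul_comp_mul
    (((measurable_ofReal.pow_const _).indicator measurableSet_Ioi).stronglyMeasurable)
    (by fun_prop) hK.1 hf
  rw [hconv]
  refine ⟨h.1, h.2.trans ?_⟩
  rw [hK.2, hmellin, smul_eq_mul, ← sub_eq_add_neg, neg_div, ← div_neg, one_div_mul_eq_div]
  ring_nf

lemma norm_Gamma_le {s : ℂ} (hs : 0 < s.re) : ‖Gamma s‖ ≤ Real.Gamma s.re := by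
  rw [Gamma_eq_integral hs, Real.Gamma_eq_integral hs]
  refine (norm_integral_le_integral_norm _).trans_eq
    (setIntegral_congr_fun measurableSet_Ioi fun x hx ↦ ?_)
  simp [norm_cpow_eq_rpow_re_of_pos hx, norm_exp]

lemma norm_Gamma_le_div_norm {s : ℂ} (hs : 0 < s.re) :
    ‖Gamma s‖ ≤ Real.Gamma (s.re + 1) / ‖s‖ := by
  have hs₀ : s ≠ 0 := fun h ↦ by simp [h] at hs
  rw [le_div_iff₀' (norm_pos_iff.2 hs₀), ← norm_mul, ← Gamma_add_one s hs₀]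
  exact norm_Gamma_le (s := s + 1) (by simp; linarith)

lemma integrable_inv_sq_norm_add_mul_I {a : ℂ} (ha : a.re ≠ 0) :
    Integrable fun t : ℝ ↦ (‖a + t * I‖ ^ 2)⁻¹ := by
  have := ((integrable_inv_one_add_sq.comp_div ha).comp_add_right a.im).const_mul (a.re ^ 2)⁻¹
  refine this.congr (.of_forall fun t ↦ ?_)
  simp only
  rw [← normSq_eq_norm_sq, normSq_apply, ← mul_inv, mul_add, div_pow]
  simp only [add_re, add_im, mul_re, mul_im, ofReal_re, ofReal_im, I_re, I_im, mul_zero, mul_one,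
    sub_self, add_zero, inv_inj]
  field_simp
  ring

lemma verticalIntegrable_Gamma_div_sub {σ : ℝ} (hσ : 0 < σ) {c : ℂ} (hc : c.re ≠ σ) :
    VerticalIntegrable (fun s ↦ Gamma s / (s - c)) σ := by
  have hσc : (σ - c).re ≠ 0 := by simpa [sub_eq_zero] using hc.symm
  have hre (t : ℝ) : (σ + t * I : ℂ).re = σ := by simp
  have hcont : Continuous fun t : ℝ ↦ Gamma (σ + t * I) / (σ + t * I - c) := by
    refine continuous_iff_continuousAt.2 fun t ↦ ContinuousAt.div ?_ (by fun_prop) fun h ↦ ?_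
    · refine (differentiableAt_Gamma _ fun m hm ↦ ?_).continuousAt.comp (by fun_prop)
      have := congr_arg re hm
      rw [hre, neg_re, natCast_re] at this
      linarith [m.cast_nonneg (α := ℝ)]
    · exact hc (by rw [← sub_eq_zero.1 h, hre])
  have hbound := ((integrable_inv_sq_norm_add_mul_I (a := σ) hσ.ne').add
    (integrable_inv_sq_norm_add_mul_I hσc)).const_mul (Real.Gamma (σ + 1))
  refine hbound.mono' hcont.aestronglyMeasurable (.of_forall fun t ↦ ?_)
  have hΓ : ‖Gamma (σ + t * I)‖ ≤ Real.Gamma (σ + 1) * ‖(σ + t * I : ℂ)‖⁻¹ := by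
    have := norm_Gamma_le_div_norm (s := σ + t * I) (by rwa [hre])
    rwa [hre, div_eq_mul_inv] at this
  calc ‖Gamma (σ + t * I) / (σ + t * I - c)‖
      ≤ Real.Gamma (σ + 1) * (‖(σ + t * I : ℂ)‖⁻¹ * ‖σ - c + t * I‖⁻¹) := by
        rw [norm_div, div_eq_mul_inv, ← mul_assoc, add_sub_right_comm]
        gcongr
    _ ≤ Real.Gamma (σ + 1) * ((‖(σ + t * I : ℂ)‖ ^ 2)⁻¹ + (‖σ - c + t * I‖ ^ 2)⁻¹) := by
        have := two_mul_le_add_sq (‖(σ + t * I : ℂ)‖⁻¹) (‖σ - c + t * I‖⁻¹)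
        have hmul : 0 ≤ ‖(σ + t * I : ℂ)‖⁻¹ * ‖σ - c + t * I‖⁻¹ := by positivity
        have := Real.Gamma_nonneg_of_nonneg (add_pos hσ one_pos).le
        simp only [← inv_pow]
        gcongr
        linarith

theorem expIntegral_eq_mellinInv {p : ℂ} {σ : ℝ} (hσ : 0 < σ) (hpσ : 1 - p.re < σ) {y : ℝ}
    (hy : 0 < y) : expIntegral p y = mellinInv σ (fun s ↦ Gamma s / (s + p - 1)) y := by
  have hmellin (t : ℝ) : mellin (expIntegral p) (σ + t * I) =
      Gamma (σ + t * I) / (σ + t * I + p - 1) :=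
    (hasMellin_expIntegral (by simpa) (by simpa)).2
  have hvert : VerticalIntegrable (mellin (expIntegral p)) σ := by
    refine (verticalIntegrable_Gamma_div_sub hσ (c := 1 - p) (by simpa using hpσ.ne)).congr
      (.of_forall fun t ↦ ?_)
    simp only [hmellin, sub_sub_eq_add_sub]
  rw [← mellinInv_mellin_eq σ (expIntegral p) hy (hasMellin_expIntegral (by simpa) (by simpa)).1
    hvert (continuousAt_expIntegral p hy)]
  simp only [mellinInv, hmellin]

end ExpIntegral

section Weight

theorem V₁_eq_mul_expIntegral {x : ℝ} (hx : 0 < x) :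
    V₁ x = ((Real.pi * x ^ 2 : ℝ) : ℂ) ^ (1 / 4 : ℂ) / Gamma (1 / 4) *
      expIntegral (3 / 4) (Real.pi * x ^ 2) := by
  set w : ℝ := Real.sqrt Real.pi * x with hw_def
  set y : ℝ := Real.pi * x ^ 2
  have hy : 0 < y := by positivity
  have hyw : y = w ^ 2 := by rw [hw_def, mul_pow, Real.sq_sqrt Real.pi_pos.le]
  have hw : (w : ℂ).arg = 0 := arg_ofReal_of_nonneg (by positivity)
  let F : ℝ → ℂ := fun t ↦ (w : ℂ) ^ (-(1 + t * I)) *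
    (Gamma ((2 * (1 + t * I) + 1) / 4) / Gamma (1 / 4)) * (1 + t * I)⁻¹
  let M : ℝ → ℂ := fun u ↦ (y : ℂ) ^ (-((3 / 4 : ℝ) + u * I)) •
    (Gamma ((3 / 4 : ℝ) + u * I) / ((3 / 4 : ℝ) + u * I + 3 / 4 - 1))
  have hpow (u : ℝ) : (w : ℂ) ^ (-(1 + (2 * u : ℝ) * I)) =
      (y : ℂ) ^ (1 / 4 : ℂ) * (y : ℂ) ^ (-((3 / 4 : ℝ) + u * I)) := by
    rw [← cpow_add _ _ (mod_cast hy.ne'), hyw, ofReal_pow,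
      ← cpow_ofNat_mul' (by simp [hw, Real.pi_pos]) (by simp [hw, Real.pi_nonneg])]
    push_cast
    ring_nf
  have hFM (u : ℝ) : F (2 * u) = (y : ℂ) ^ (1 / 4 : ℂ) / Gamma (1 / 4) / 2 * M u := by
    have hΓ : (2 * (1 + (2 * u : ℝ) * I) + 1) / 4 = (3 / 4 : ℝ) + u * I := by
      push_cast; ring
    have hden : (1 + (2 * u : ℝ) * I) = 2 * ((3 / 4 : ℝ) + u * I + 3 / 4 - 1) := by
      push_cast; ring
    simp only [F, M]
    rw [hpow, hΓ, hden, smul_eq_mul, mul_inv]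
    ring
  have hF : ∫ t, F t = (y : ℂ) ^ (1 / 4 : ℂ) / Gamma (1 / 4) * ∫ u, M u := by
    have hscale := Measure.integral_comp_mul_left F 2
    simp only [hFM, integral_const_mul, real_smul, abs_inv, abs_two] at hscale
    push_cast at hscale
    linear_combination -2 * hscale
  have h2π : ((1 / (2 * Real.pi) : ℝ) : ℂ) = 1 / (2 * Real.pi) := by push_cast; rfl
  rw [expIntegral_eq_mellinInv (σ := 3 / 4) (by norm_num) (by norm_num) hy, V₁, hF, mellinInv,
    real_smul, h2π, mul_left_comm]

lemma V₁_div_sqrt {m N : ℝ} (hm : 0 < m) (hN : 0 < N) :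
    V₁ (m / Real.sqrt N) / Real.sqrt m =
      (N : ℂ) ^ (-(1 / 4) : ℂ) / Gammaℝ (1 / 2) * expIntegral (3 / 4) (Real.pi / N * m ^ 2) := by
  have hsq : Real.pi * (m / Real.sqrt N) ^ 2 = Real.pi / N * m ^ 2 := by
    rw [div_pow, Real.sq_sqrt hN.le, div_mul_eq_mul_div, mul_div_assoc]
  have hpow : ((Real.pi / N * m ^ 2 : ℝ) : ℂ) ^ (1 / 4 : ℂ) =
      (N : ℂ) ^ (-(1 / 4) : ℂ) * (Real.pi : ℂ) ^ (1 / 4 : ℂ) * Real.sqrt m := by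
    have h : (Real.pi / N * m ^ 2 : ℝ) ^ (1 / 4 : ℝ) =
        N ^ (-(1 / 4) : ℝ) * Real.pi ^ (1 / 4 : ℝ) * Real.sqrt m := by
      rw [Real.mul_rpow (by positivity) (sq_nonneg m), Real.div_rpow Real.pi_pos.le hN.le,
        Real.rpow_neg hN.le, ← Real.rpow_natCast_mul hm.le, Real.sqrt_eq_rpow]
      have htwo : ((2 : ℕ) : ℝ) * (1 / 4) = 1 / 2 := by norm_num
      rw [htwo]
      ring
    have := congr_arg ofReal h
    push_cast [ofReal_cpow hN.le, ofReal_cpow Real.pi_pos.le,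
      ofReal_cpow (by positivity : 0 ≤ Real.pi / N * m ^ 2)] at this ⊢
    exact this
  have hΓ : Gammaℝ (1 / 2) = (Real.pi : ℂ) ^ (-(1 / 4) : ℂ) * Gamma (1 / 4) := by
    rw [Gammaℝ_def]
    norm_num
  have hsqrt : (Real.sqrt m : ℂ) ≠ 0 := mod_cast (Real.sqrt_pos.2 hm).ne'
  rw [V₁_eq_mul_expIntegral (by positivity), hsq, hpow, hΓ, cpow_neg (Real.pi : ℂ)]
  field_simp

end Weight

section Theta

variable {N : ℕ} [NeZero N]

/-- The theta series `θ_Φ(x) = ∑ n : ℤ, Φ(n) exp(-π n² x / N)` of a function `Φ` on `ℤ/N`, encoded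
as a combination of Hurwitz theta kernels; see `hasSum_int_thetaKernel`. -/
noncomputable def thetaKernel (Φ : ZMod N → ℂ) (x : ℝ) : ℂ :=
  ∑ j, Φ j * evenKernel (ZMod.toAddCircle j) (N * x)

lemma hasSum_int_of_forall_residue {g : ℤ → ℂ} {a : ZMod N → ℂ}
    (h : ∀ j : ZMod N, HasSum (fun n : ℤ ↦ g (N * n + j.val)) (a j)) : HasSum g (∑ j, a j) := by
  have hclass (j : ZMod N) : HasSum (fun m : ℤ ↦ if (m : ZMod N) = j then g m else 0) (a j) := by
    have hinj : Function.Injective fun n : ℤ ↦ (N * n + j.val : ℤ) := fun m n hmn ↦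
      mul_left_cancel₀ (mod_cast NeZero.ne N) (add_right_cancel hmn)
    rw [← hinj.hasSum_iff]
    · refine (h j).congr_fun fun n ↦ ?_
      simp
    · rintro m hm
      refine if_neg ?_
      rintro rfl
      refine hm ⟨m / N, ?_⟩
      simp only [ZMod.val_intCast]
      exact Int.mul_ediv_add_emod m N
  simpa using hasSum_sum (s := Finset.univ) fun j _ ↦ hclass j

lemma hasSum_int_thetaKernel (Φ : ZMod N → ℂ) {x : ℝ} (hx : 0 < x) :
    HasSum (fun n : ℤ ↦ Φ n * Real.exp (-(Real.pi / N * n ^ 2 * x))) (thetaKernel Φ x) := by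
  have hN : (0 : ℝ) < N := mod_cast NeZero.pos N
  refine hasSum_int_of_forall_residue fun j ↦ ?_
  rw [ZMod.toAddCircle_apply]
  refine ((hasSum_ofReal.2 (hasSum_int_evenKernel (j.val / N : ℝ) (mul_pos hN hx))).mul_left
    (Φ j)).congr_fun fun n ↦ ?_
  have hj : ((N * n + j.val : ℤ) : ZMod N) = j := by simp
  have hexp : -(Real.pi / N * (N * n + j.val : ℤ) ^ 2 * x) =
      -Real.pi * (n + j.val / N) ^ 2 * (N * x) := by
    push_cast
    field_simp
  rw [hj, hexp]

lemma hasSum_int_cosKernel_toAddCircle (j : ZMod N) {x : ℝ} (hx : 0 < x) :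
    HasSum (fun n : ℤ ↦ ZMod.stdAddChar (-(j * (n : ZMod N))) * Real.exp (-Real.pi * n ^ 2 * x))
      (cosKernel (ZMod.toAddCircle j) x : ℂ) := by
  rw [← cosKernel_neg, ZMod.toAddCircle_apply, ← AddCircle.coe_neg]
  refine (hasSum_int_cosKernel (-(j.val / N : ℝ)) hx).congr_fun fun n ↦ ?_
  have hj : -(j * n) = ((-(j.val * n) : ℤ) : ZMod N) := by simp
  rw [hj, ZMod.stdAddChar_coe]
  congr 2
  push_cast
  ring

lemma sum_mul_cosKernel_eq_thetaKernel_dft (Φ : ZMod N → ℂ) {x : ℝ} (hx : 0 < x) :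
    ∑ j, Φ j * cosKernel (ZMod.toAddCircle j) (x / N) = thetaKernel (𝓕 Φ) x := by
  have hN : (0 : ℝ) < N := mod_cast NeZero.pos N
  have hsum := hasSum_sum (s := Finset.univ) fun j _ ↦
    (hasSum_int_cosKernel_toAddCircle j (div_pos hx hN)).mul_left (Φ j)
  refine (hsum.congr_fun fun n ↦ ?_).unique (hasSum_int_thetaKernel (𝓕 Φ) hx)
  have hexp : -(Real.pi / N * n ^ 2 * x) = -Real.pi * n ^ 2 * (x / N) := by ring
  rw [ZMod.dft_apply, Finset.sum_mul, hexp]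
  exact Finset.sum_congr rfl fun j _ ↦ by rw [smul_eq_mul]; ring

theorem thetaKernel_one_div (Φ : ZMod N → ℂ) {x : ℝ} (hx : 0 < x) :
    thetaKernel Φ (1 / x) =
      ((N : ℂ) ^ (-(1 / 2) : ℂ) * (x ^ (1 / 2 : ℝ) : ℝ)) * thetaKernel (𝓕 Φ) x := by
  have hN : (0 : ℝ) < N := mod_cast NeZero.pos N
  have hfactor : ((1 / (N * (1 / x)) ^ (1 / 2 : ℝ) : ℝ) : ℂ) =
      (N : ℂ) ^ (-(1 / 2) : ℂ) * (x ^ (1 / 2 : ℝ) : ℝ) := by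
    rw [mul_one_div, Real.div_rpow hN.le hx.le, one_div_div, cpow_neg]
    push_cast [ofReal_cpow hN.le]
    ring
  rw [thetaKernel, ← sum_mul_cosKernel_eq_thetaKernel_dft Φ hx, Finset.mul_sum]
  refine Finset.sum_congr rfl fun j _ ↦ ?_
  rw [evenKernel_functional_equation, ofReal_mul, hfactor, mul_one_div, one_div_div]
  ring

lemma continuousOn_thetaKernel (Φ : ZMod N → ℂ) : ContinuousOn (thetaKernel Φ) (Ioi 0) := by
  have hN : (0 : ℝ) < N := mod_cast NeZero.pos N
  refine continuousOn_finsetSum _ fun j _ ↦ continuousOn_const.mul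
    (continuous_ofReal.comp_continuousOn ((continuousOn_evenKernel _).comp
      (by fun_prop) fun x hx ↦ mul_pos hN hx))

lemma thetaKernel_sub_apply_zero (Φ : ZMod N → ℂ) (x : ℝ) :
    thetaKernel Φ x - Φ 0 = ∑ j, Φ j * ((hurwitzEvenFEPair (ZMod.toAddCircle j)).f (N * x) -
      (hurwitzEvenFEPair (ZMod.toAddCircle j)).f₀) := by
  simp [thetaKernel, hurwitzEvenFEPair, mul_sub]

lemma isBigO_atTop_thetaKernel_sub (Φ : ZMod N → ℂ) (r : ℝ) :
    (fun x ↦ thetaKernel Φ x - Φ 0) =O[atTop] fun x ↦ x ^ r := by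
  have hN : (0 : ℝ) < N := mod_cast NeZero.pos N
  have hscale : (fun x : ℝ ↦ (N * x) ^ r) =O[atTop] fun x ↦ x ^ r := by
    refine (Asymptotics.isBigO_const_mul_self ((N : ℝ) ^ r) _ _).congr' ?_ .rfl
    filter_upwards [eventually_ge_atTop 0] with x hx
    rw [Real.mul_rpow hN.le hx]
  simp only [thetaKernel_sub_apply_zero]
  refine Asymptotics.IsBigO.fun_sum fun j _ ↦ .const_mul_left (.trans ?_ hscale) _
  exact ((hurwitzEvenFEPair _).hf_top r).comp_tendsto (tendsto_id.const_mul_atTop hN)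

/-- The functional equation relating `θ_Φ(1/x)` to `θ_{𝓕 Φ}(x)`, where `𝓕 Φ` is the discrete
Fourier transform, packaged for Mathlib's theory of Mellin transforms. -/
noncomputable def thetaFEPair (Φ : ZMod N → ℂ) : WeakFEPair ℂ where
  f := thetaKernel Φ
  g := thetaKernel (𝓕 Φ)
  k := 1 / 2
  ε := (N : ℂ) ^ (-(1 / 2) : ℂ)
  f₀ := Φ 0
  g₀ := 𝓕 Φ 0
  hf_int := (continuousOn_thetaKernel Φ).locallyIntegrableOn measurableSet_Ioi
  hg_int := (continuousOn_thetaKernel (𝓕 Φ)).locallyIntegrableOn measurableSet_Ioi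
  hk := one_half_pos
  hε := by simp [NeZero.ne N]
  h_feq _ hx := thetaKernel_one_div Φ hx
  hf_top := isBigO_atTop_thetaKernel_sub Φ
  hg_top := isBigO_atTop_thetaKernel_sub (𝓕 Φ)

lemma isStrongFEPair_thetaFEPair {Φ : ZMod N → ℂ} (hΦ₀ : Φ 0 = 0) (hΦ : ∑ j, Φ j = 0) :
    IsStrongFEPair (thetaFEPair Φ) :=
  ⟨hΦ₀, (ZMod.dft_apply_zero Φ).trans hΦ⟩

lemma hasSum_nat_thetaKernel {Φ : ZMod N → ℂ} (hΦ : Φ.Even) (hΦ₀ : Φ 0 = 0) {x : ℝ} (hx : 0 < x) :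
    HasSum (fun n : ℕ ↦ 2 * Φ n * Real.exp (-(Real.pi / N * n ^ 2 * x))) (thetaKernel Φ x) := by
  have := (hasSum_int_thetaKernel Φ hx).nat_add_neg
  refine (by simpa [hΦ₀] using this : HasSum _ _).congr_fun fun n ↦ ?_
  have := hΦ n
  simp [this, two_mul, add_mul]

end Theta

section CompletedLFunction

variable {N : ℕ} [NeZero N] {Φ : ZMod N → ℂ}

lemma thetaFEPair_Λ_of_one_lt_re (hΦ : Φ.Even) {s : ℂ} (hs : 1 < s.re) :
    (thetaFEPair Φ).Λ (s / 2) = 2 * N ^ (s / 2) * ZMod.completedLFunction Φ s := by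
  have hN : (0 : ℝ) < N := mod_cast NeZero.pos N
  have hN₀ : (N : ℂ) ≠ 0 := NeZero.ne _
  have hs₂ : 1 / 2 < (s / 2).re := by rw [div_ofNat_re]; linarith
  let h (j : ZMod N) (x : ℝ) : ℂ := (hurwitzEvenFEPair (ZMod.toAddCircle j)).f x -
    (hurwitzEvenFEPair (ZMod.toAddCircle j)).f₀
  have hh (j : ZMod N) : HasMellin (h j) (s / 2)
      (2 * completedHurwitzZetaEven (ZMod.toAddCircle j) s) := by
    rw [completedHurwitzZetaEven, mul_div_cancel₀ _ two_ne_zero]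
    exact (hurwitzEvenFEPair _).hasMellin hs₂
  have hscale (j : ZMod N) : HasMellin (fun x ↦ Φ j • h j (N * x)) (s / 2)
      (Φ j • ((N : ℂ) ^ (-(s / 2)) • (2 * completedHurwitzZetaEven (ZMod.toAddCircle j) s))) := by
    refine ⟨((MellinConvergent.comp_mul_left hN).2 (hh j).1).const_smul _, ?_⟩
    rw [mellin_const_smul, mellin_comp_mul_left _ _ hN, (hh j).2, ofReal_natCast]
  have hpow : (N : ℂ) ^ (-(s / 2)) = N ^ (s / 2) * N ^ (-s) := by
    rw [← cpow_add _ _ hN₀]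
    ring_nf
  calc (thetaFEPair Φ).Λ (s / 2)
      = mellin (fun x ↦ thetaKernel Φ x - Φ 0) (s / 2) := ((thetaFEPair Φ).hasMellin hs₂).2.symm
    _ = ∑ j, mellin (fun x ↦ Φ j • h j (N * x)) (s / 2) := by
        simp only [mellin, thetaKernel_sub_apply_zero, Finset.smul_sum]
        exact integral_finsetSum _ fun j _ ↦ (hscale j).1
    _ = 2 * N ^ (s / 2) * ZMod.completedLFunction Φ s := by
        rw [ZMod.completedLFunction_def_even hΦ, ← mul_assoc, Finset.mul_sum]
        refine Finset.sum_congr rfl fun j _ ↦ ?_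
        rw [(hscale j).2, hpow, smul_eq_mul, smul_eq_mul]
        ring

theorem thetaFEPair_Λ_eq_completedLFunction (hΦ : Φ.Even) (hΦ₀ : Φ 0 = 0) (hsum : ∑ j, Φ j = 0)
    (s : ℂ) : (thetaFEPair Φ).Λ (s / 2) = 2 * N ^ (s / 2) * ZMod.completedLFunction Φ s := by
  have hN₀ : (N : ℂ) ≠ 0 := NeZero.ne _
  have hleft : AnalyticOnNhd ℂ (fun s ↦ (thetaFEPair Φ).Λ (s / 2)) univ :=
    analyticOnNhd_univ_iff_differentiable.2
      ((isStrongFEPair_thetaFEPair hΦ₀ hsum).differentiable_Λ.comp (by fun_prop))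
  have hright : AnalyticOnNhd ℂ
      (fun s ↦ 2 * (N : ℂ) ^ (s / 2) * ZMod.completedLFunction Φ s) univ := by
    refine analyticOnNhd_univ_iff_differentiable.2 (.mul (.const_mul ?_ _)
      (ZMod.differentiable_completedLFunction hΦ₀ hsum))
    exact .const_cpow (by fun_prop) (.inl hN₀)
  have hhalfPlane : {z : ℂ | 1 < z.re} ∈ 𝓝 2 :=
    (continuous_re.isOpen_preimage _ isOpen_Ioi).mem_nhds (by simp)
  refine congr_fun (hleft.eq_of_eventuallyEq hright (z₀ := 2) ?_) s
  filter_upwards [hhalfPlane] with z hz using thetaFEPair_Λ_of_one_lt_re hΦ hz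

theorem integral_Ioi_one_cpow_mul_thetaKernel (hΦ : Φ.Even) (hΦ₀ : Φ 0 = 0) (p : ℂ) :
    ∫ x in Ioi (1 : ℝ), (x : ℂ) ^ (-p) * thetaKernel Φ x =
      2 * ∑' n : ℕ, Φ (n + 1 : ℕ) * expIntegral p (Real.pi / N * (n + 1 : ℕ) ^ 2) := by
  have hN : (0 : ℝ) < N := mod_cast NeZero.pos N
  have hc : 0 < Real.pi / N := div_pos Real.pi_pos hN
  let F (n : ℕ) (x : ℝ) : ℂ := 2 * Φ (n + 1 : ℕ) *
    ((x : ℂ) ^ (-p) * Real.exp (-(Real.pi / N * (n + 1 : ℕ) ^ 2 * x)))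
  have hF (n : ℕ) : IntegrableOn (F n) (Ioi 1) :=
    (integrableOn_cpow_mul_exp_neg_Ioi p (by positivity)).const_mul _
  have hF_norm : Summable fun n ↦ ∫ x in Ioi (1 : ℝ), ‖F n x‖ := by
    refine ((summable_integral_norm_cpow_mul_exp_neg p hc).mul_left (2 * ‖Φ‖)).of_nonneg_of_le
      (fun n ↦ integral_nonneg fun x ↦ norm_nonneg _) fun n ↦ ?_
    simp only [F, norm_mul (2 * Φ _), norm_mul (2 : ℂ), norm_ofNat, integral_const_mul]
    gcongr
    exact norm_le_pi_norm Φ _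
  have hF_tsum {x : ℝ} (hx : x ∈ Ioi 1) : (x : ℂ) ^ (-p) * thetaKernel Φ x = ∑' n, F n x := by
    have h := (hasSum_nat_add_iff' 1).2 (hasSum_nat_thetaKernel hΦ hΦ₀ (one_pos.trans hx))
    rw [Finset.sum_range_one, Nat.cast_zero, hΦ₀, mul_zero, zero_mul, sub_zero] at h
    rw [← (h.mul_left ((x : ℂ) ^ (-p))).tsum_eq]
    exact tsum_congr fun n ↦ mul_left_comm _ _ _
  rw [setIntegral_congr_fun measurableSet_Ioi fun x ↦ hF_tsum,
    ← (hasSum_integral_of_summable_integral_norm hF hF_norm).tsum_eq, ← tsum_mul_left]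
  simp only [F, integral_const_mul, mul_assoc, expIntegral]

theorem completedLFunction_eq_tsum_expIntegral (hΦ : Φ.Even) (hΦ₀ : Φ 0 = 0)
    (hsum : ∑ j, Φ j = 0) (s : ℂ) :
    ZMod.completedLFunction Φ s = N ^ (-(s / 2)) *
      ((∑' n : ℕ, Φ (n + 1 : ℕ) * expIntegral (1 - s / 2) (Real.pi / N * (n + 1 : ℕ) ^ 2)) +
      N ^ (-(1 / 2) : ℂ) * ∑' n : ℕ,
        𝓕 Φ (n + 1 : ℕ) * expIntegral ((1 + s) / 2) (Real.pi / N * (n + 1 : ℕ) ^ 2)) := by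
  have hN₀ : (N : ℂ) ≠ 0 := NeZero.ne _
  have hΛ := strongFEPair_Λ_eq_integral_Ioi_one_add (isStrongFEPair_thetaFEPair hΦ₀ hsum) (s / 2)
  have hp : s / 2 - 1 = -(1 - s / 2) := by ring
  have hp' : ((thetaFEPair Φ).k : ℂ) - s / 2 - 1 = -((1 + s) / 2) := by
    simp only [thetaFEPair]; push_cast; ring
  rw [thetaFEPair_Λ_eq_completedLFunction hΦ hΦ₀ hsum, hp, hp'] at hΛ
  simp only [thetaFEPair, smul_eq_mul] at hΛ
  rw [integral_Ioi_one_cpow_mul_thetaKernel hΦ hΦ₀,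
    integral_Ioi_one_cpow_mul_thetaKernel (ZMod.dft_even_iff.2 hΦ)
      ((ZMod.dft_apply_zero Φ).trans hsum)] at hΛ
  rw [cpow_neg, eq_inv_mul_iff_mul_eq₀ (by simp [hN₀])]
  linear_combination hΛ / 2

end CompletedLFunction

section DirichletCharacter

lemma even_inv_of_even {R : Type*} [Field R] {n : ℕ} {χ : DirichletCharacter R n} (hχ : χ.Even) :
    χ⁻¹.Even := by
  rw [DirichletCharacter.Even, MulChar.inv_apply_eq_inv', hχ, inv_one]

lemma isPrimitive_of_prime_of_ne_one {R : Type*} [CommMonoidWithZero R] {p : ℕ} (hp : p.Prime)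
    {χ : DirichletCharacter R p} (hχ : χ ≠ 1) : χ.IsPrimitive := by
  have : NeZero p := ⟨hp.ne_zero⟩
  exact ((Nat.dvd_prime hp).1 χ.conductor_dvd_level).resolve_left
    fun h ↦ hχ (DirichletCharacter.eq_one_iff_conductor_eq_one.2 h)

end DirichletCharacter

section ApproximateFunctionalEquation

variable {N : ℕ} [NeZero N]

lemma div_sqrt_mul_V₁ (a : ℂ) (n : ℕ) :
    a / (Real.sqrt (n + 1) : ℂ) * V₁ ((n + 1) / Real.sqrt N) =
      (N : ℂ) ^ (-(1 / 4) : ℂ) / Gammaℝ (1 / 2) *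
        (a * expIntegral (3 / 4) (Real.pi / N * (n + 1 : ℕ) ^ 2)) := by
  have h := V₁_div_sqrt n.cast_add_one_pos (mod_cast NeZero.pos N : (0 : ℝ) < N)
  rw [ofReal_natCast] at h
  push_cast
  linear_combination a * h

lemma summable_norm_div_sqrt_mul_V₁ {a : ℕ → ℂ} {B : ℝ} (ha : ∀ n, ‖a n‖ ≤ B) :
    Summable fun n : ℕ ↦ ‖a n / (Real.sqrt (n + 1) : ℂ) * V₁ ((n + 1) / Real.sqrt N)‖ := by
  have hN : (0 : ℝ) < N := mod_cast NeZero.pos N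
  simp only [div_sqrt_mul_V₁, norm_mul _ (_ * expIntegral _ _)]
  exact (summable_norm_mul_expIntegral ha _ (div_pos Real.pi_pos hN)).mul_left _

theorem LFunction_one_half_eq_tsum_V₁ {Φ : ZMod N → ℂ} (hΦ : Φ.Even) (hΦ₀ : Φ 0 = 0)
    (hsum : ∑ j, Φ j = 0) :
    ZMod.LFunction Φ (1 / 2) =
      (∑' n : ℕ, Φ (n + 1 : ℕ) / (Real.sqrt (n + 1) : ℂ) * V₁ ((n + 1) / Real.sqrt N)) +
      1 / (Real.sqrt N : ℂ) *
        ∑' n : ℕ, 𝓕 Φ (n + 1 : ℕ) / (Real.sqrt (n + 1) : ℂ) * V₁ ((n + 1) / Real.sqrt N) := by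
  have hsqrt : 1 / (Real.sqrt N : ℂ) = (N : ℂ) ^ (-(1 / 2) : ℂ) := by
    rw [Real.sqrt_eq_rpow, ofReal_cpow N.cast_nonneg, cpow_neg]
    push_cast
    exact one_div _
  have hquarter : (1 / 2 / 2 : ℂ) = 1 / 4 := by norm_num
  have hp : (1 - 1 / 4 : ℂ) = 3 / 4 := by norm_num
  have hp' : ((1 + 1 / 2) / 2 : ℂ) = 3 / 4 := by norm_num
  rw [ZMod.LFunction_eq_completed_div_gammaFactor_even hΦ _ (.inr hΦ₀),
    completedLFunction_eq_tsum_expIntegral hΦ hΦ₀ hsum, hquarter, hp, hp', hsqrt]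
  simp only [div_sqrt_mul_V₁, tsum_mul_left]
  ring

lemma gaussSumE_eq_gaussSum (χ : DirichletCharacter ℂ N) :
    gaussSumE χ = gaussSum χ ZMod.stdAddChar := by
  simp only [gaussSumE, gaussSum, ZMod.stdAddChar_apply, ZMod.toCircle_apply]

theorem LFunction_one_half_eq_tsum_V₁_of_isPrimitive {χ : DirichletCharacter ℂ N}
    (hprim : χ.IsPrimitive) (hχ : χ ≠ 1) (heven : χ.Even) :
    χ.LFunction (1 / 2) =
      (∑' n : ℕ, χ (n + 1 : ℕ) / (Real.sqrt (n + 1) : ℂ) * V₁ ((n + 1) / Real.sqrt N)) +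
      gaussSumE χ / (Real.sqrt N : ℂ) *
        ∑' n : ℕ, χ⁻¹ (n + 1 : ℕ) / (Real.sqrt (n + 1) : ℂ) * V₁ ((n + 1) / Real.sqrt N) := by
  have : Nontrivial (ZMod N) := by
    refine ZMod.nontrivial_iff.2 ?_
    rintro rfl
    exact hχ χ.level_one
  have hdft (n : ℕ) : 𝓕 χ (n + 1 : ℕ) = gaussSumE χ * χ⁻¹ (n + 1 : ℕ) := by
    rw [hprim.fourierTransform_eq_inv_mul_gaussSum, (even_inv_of_even heven).to_fun,
      gaussSumE_eq_gaussSum, mul_comm]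
  have h := LFunction_one_half_eq_tsum_V₁ heven.to_fun χ.map_zero (MulChar.sum_eq_zero_of_ne_one hχ)
  simp only [hdft, mul_div_assoc (gaussSumE χ), mul_assoc (gaussSumE χ), tsum_mul_left] at h
  rw [DirichletCharacter.LFunction, h, ← mul_assoc, one_div_mul_eq_div]

end ApproximateFunctionalEquation

theorem stmt1_general (q : ℕ) [NeZero q] (χ : DirichletCharacter ℂ q) (hprim : χ.IsPrimitive)
    (hχ : χ ≠ 1) (heven : χ (-1) = 1) :
    Summable (fun m : ℕ =>
      ‖(χ.ringHomComp (starRingEnd ℂ)) ((m + 1 : ℕ) : ZMod q) /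
          (Real.sqrt (m + 1) : ℂ) * V₁ ((m + 1) / Real.sqrt q)‖) ∧
    Summable (fun m : ℕ =>
      ‖χ ((m + 1 : ℕ) : ZMod q) / (Real.sqrt (m + 1) : ℂ) *
          V₁ ((m + 1) / Real.sqrt q)‖) ∧
    DirichletCharacter.LFunction (χ.ringHomComp (starRingEnd ℂ)) (1 / 2) =
      (∑' m : ℕ, (χ.ringHomComp (starRingEnd ℂ)) ((m + 1 : ℕ) : ZMod q) /
          (Real.sqrt (m + 1) : ℂ) * V₁ ((m + 1) / Real.sqrt q)) +
      gaussSumE (χ.ringHomComp (starRingEnd ℂ)) / (Real.sqrt q : ℂ) *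
        ∑' m : ℕ, χ ((m + 1 : ℕ) : ZMod q) / (Real.sqrt (m + 1) : ℂ) *
          V₁ ((m + 1) / Real.sqrt q) := by
  have hconj : χ.ringHomComp (starRingEnd ℂ) = χ⁻¹ := MulChar.star_eq_inv χ
  have hprim_inv : χ⁻¹.IsPrimitive := χ.conductor_inv.trans hprim
  have h := LFunction_one_half_eq_tsum_V₁_of_isPrimitive hprim_inv (inv_ne_one.2 hχ)
    (even_inv_of_even heven)
  rw [inv_inv] at h
  rw [hconj]
  exact ⟨summable_norm_div_sqrt_mul_V₁ fun n ↦ χ⁻¹.norm_le_one _,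
    summable_norm_div_sqrt_mul_V₁ fun n ↦ χ.norm_le_one _, h⟩

end

/-- **Approximate functional equation for `L(1/2, χ̄)`.** For `q` a prime and `χ` an even
nontrivial (equivalently, primitive) Dirichlet character mod `q`,
`L(1/2, χ̄) = ∑_{m ≥ 1} χ̄(m) m^{-1/2} V₁(m/√q) + (τ(χ̄)/√q) ∑_{m ≥ 1} χ(m) m^{-1/2} V₁(m/√q)`,
both series converging absolutely. -/
theorem stmt1 (q : ℕ) [NeZero q] (hq : q.Prime) (χ : DirichletCharacter ℂ q)
    (hχ : χ ≠ 1) (heven : χ (-1) = 1) :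
    Summable (fun m : ℕ =>
      ‖(χ.ringHomComp (starRingEnd ℂ)) ((m + 1 : ℕ) : ZMod q) /
          (Real.sqrt (m + 1) : ℂ) * V₁ ((m + 1) / Real.sqrt q)‖) ∧
    Summable (fun m : ℕ =>
      ‖χ ((m + 1 : ℕ) : ZMod q) / (Real.sqrt (m + 1) : ℂ) *
          V₁ ((m + 1) / Real.sqrt q)‖) ∧
    DirichletCharacter.LFunction (χ.ringHomComp (starRingEnd ℂ)) (1 / 2) =
      (∑' m : ℕ, (χ.ringHomComp (starRingEnd ℂ)) ((m + 1 : ℕ) : ZMod q) /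
          (Real.sqrt (m + 1) : ℂ) * V₁ ((m + 1) / Real.sqrt q)) +
      gaussSumE (χ.ringHomComp (starRingEnd ℂ)) / (Real.sqrt q : ℂ) *
        ∑' m : ℕ, χ ((m + 1 : ℕ) : ZMod q) / (Real.sqrt (m + 1) : ℂ) *
          V₁ ((m + 1) / Real.sqrt q) :=
  stmt1_general q χ (isPrimitive_of_prime_of_ne_one hq hχ) hχ heven
end

section
/- For every δ ∈ (0, 1/2) there exists a constant K > 0 such that for all x with 0 < x ≤ 1 one has |V₁(x) − 1| ≤ K · x^{1/2 − δ}. -/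
open Complex

/-!
By Fubini, the Mellin transform of a tail `y ↦ ∫_y^∞ f` at `s` is `s⁻¹` times that of `f` at
`s + 1`. For `f(u) = e^(-u) u^(a-1)` the tail is the upper incomplete Gamma function `Γ(a, y)`,
whose Mellin transform is therefore `Γ(s + a) / s`. The substitution `s ↦ s / 2` turns `V₁ x` into
the inverse Mellin transform of this quotient for `a = 1/4`, so Mellin inversion gives
`V₁(x) = Γ(1/4, π x²) / Γ(1/4)`. Hence `1 - V₁(x)` is the lower incomplete Gamma function
`∫_0^(π x²) e^(-u) u^(-3/4) du` divided by `Γ(1/4)`, and bounding `e^(-u)` by `1` shows that it is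
`O(x^(1/2))`.
-/

section MellinTransform

open MeasureTheory Set

variable {E : Type*} [NormedAddCommGroup E] [NormedSpace ℂ E]

lemma aestronglyMeasurable_of_mellinConvergent {f : ℝ → E} {s : ℂ} (hf : MellinConvergent f s) :
    AEStronglyMeasurable f (volume.restrict (Ioi 0)) := by
  have hpow : AEStronglyMeasurable (fun t : ℝ => (t : ℂ) ^ (1 - s)) (volume.restrict (Ioi 0)) :=
    (measurable_ofReal.pow_const _).aestronglyMeasurable
  refine (hpow.smul hf.aestronglyMeasurable).congr ?_
  filter_upwards [ae_restrict_mem measurableSet_Ioi] with t ht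
  have ht0 : (t : ℂ) ≠ 0 := ofReal_ne_zero.mpr (ne_of_gt ht)
  rw [Pi.smul_apply', smul_smul, ← cpow_add _ _ ht0, sub_add_sub_cancel', sub_self,
    cpow_zero, one_smul]

lemma integrableOn_Ioo_cpow_sub_one {s : ℂ} (hs : 0 < s.re) {u : ℝ} (hu : 0 ≤ u) :
    IntegrableOn (fun y : ℝ => (y : ℂ) ^ (s - 1)) (Ioo 0 u) :=
  (intervalIntegrable_iff_integrableOn_Ioo_of_le hu).mp
    (intervalIntegral.intervalIntegrable_cpow' (by simpa using hs))

lemma integral_Ioo_cpow_sub_one {s : ℂ} (hs : 0 < s.re) {u : ℝ} (hu : 0 ≤ u) :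
    ∫ y in Ioo 0 u, (y : ℂ) ^ (s - 1) = (u : ℂ) ^ s / s := by
  have hs0 : s ≠ 0 := ne_zero_of_re_pos hs
  rw [← integral_Ioc_eq_integral_Ioo, ← intervalIntegral.integral_of_le hu,
    integral_cpow (.inl (by simpa using hs)), sub_add_cancel, ofReal_zero, zero_cpow hs0, sub_zero]

lemma integral_Ioo_norm_cpow_sub_one {s : ℂ} (hs : 0 < s.re) {u : ℝ} (hu : 0 ≤ u) :
    ∫ y in Ioo 0 u, ‖(y : ℂ) ^ (s - 1)‖ = u ^ s.re / s.re := by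
  have hnorm : ∀ y ∈ Ioo 0 u, ‖(y : ℂ) ^ (s - 1)‖ = y ^ (s.re - 1) := fun y hy => by
    simp [norm_cpow_eq_rpow_re_of_pos hy.1]
  rw [setIntegral_congr_fun measurableSet_Ioo hnorm, ← integral_Ioc_eq_integral_Ioo,
    ← intervalIntegral.integral_of_le hu, integral_rpow (.inl (by simpa using hs)),
    sub_add_cancel, Real.zero_rpow hs.ne', sub_zero]

/-- The function `(y, u) ↦ 1_{y < u} y^(s-1) f(u)`, whose iterated integrals over `(0, ∞)²` both
compute the Mellin transform of the tail `y ↦ ∫_y^∞ f`. -/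
noncomputable def mellinTailKernel (f : ℝ → E) (s : ℂ) (p : ℝ × ℝ) : E :=
  {p : ℝ × ℝ | p.1 < p.2}.indicator (fun p => (p.1 : ℂ) ^ (s - 1) • f p.2) p

lemma mellinTailKernel_eq_indicator_Iio (f : ℝ → E) (s : ℂ) (y u : ℝ) :
    mellinTailKernel f s (y, u) = (Iio u).indicator (fun y : ℝ => (y : ℂ) ^ (s - 1) • f u) y :=
  rfl

lemma mellinTailKernel_eq_indicator_Ioi (f : ℝ → E) (s : ℂ) (y u : ℝ) :
    mellinTailKernel f s (y, u) = (Ioi y).indicator (fun u => (y : ℂ) ^ (s - 1) • f u) u :=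
  rfl

lemma integral_mellinTailKernel_right (f : ℝ → E) (s : ℂ) {y : ℝ} (hy : 0 ≤ y) :
    ∫ u in Ioi 0, mellinTailKernel f s (y, u) = (y : ℂ) ^ (s - 1) • ∫ u in Ioi y, f u := by
  simp only [mellinTailKernel_eq_indicator_Ioi]
  rw [setIntegral_indicator measurableSet_Ioi, Ioi_inter_Ioi, sup_eq_right.mpr hy, integral_smul]

lemma integral_mellinTailKernel_left [CompleteSpace E] (f : ℝ → E) {s : ℂ} (hs : 0 < s.re)
    {u : ℝ} (hu : 0 ≤ u) :
    ∫ y in Ioi 0, mellinTailKernel f s (y, u) = s⁻¹ • (u : ℂ) ^ s • f u := by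
  simp only [mellinTailKernel_eq_indicator_Iio]
  rw [setIntegral_indicator measurableSet_Iio, Ioi_inter_Iio, integral_smul_const,
    integral_Ioo_cpow_sub_one hs hu, smul_smul, div_eq_inv_mul]

lemma integral_norm_mellinTailKernel_left (f : ℝ → E) {s : ℂ} (hs : 0 < s.re) {u : ℝ} (hu : 0 < u) :
    ∫ y in Ioi 0, ‖mellinTailKernel f s (y, u)‖ = s.re⁻¹ * ‖(u : ℂ) ^ s • f u‖ := by
  simp only [mellinTailKernel_eq_indicator_Iio, norm_indicator_eq_indicator_norm, norm_smul]
  rw [setIntegral_indicator measurableSet_Iio, Ioi_inter_Iio, integral_mul_const,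
    integral_Ioo_norm_cpow_sub_one hs hu.le, norm_cpow_eq_rpow_re_of_pos hu, div_eq_inv_mul,
    mul_assoc]

lemma integrable_mellinTailKernel {f : ℝ → E} {s : ℂ} (hs : 0 < s.re)
    (hf : MellinConvergent f (s + 1)) :
    Integrable (mellinTailKernel f s)
      ((volume.restrict (Ioi 0)).prod (volume.restrict (Ioi 0))) := by
  have hmeas : AEStronglyMeasurable (mellinTailKernel f s)
      ((volume.restrict (Ioi 0)).prod (volume.restrict (Ioi 0))) := by
    refine AEStronglyMeasurable.indicator (.smul ?_ ?_)
      (measurableSet_lt measurable_fst measurable_snd)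
    · exact ((measurable_ofReal.comp measurable_fst).pow_const _).aestronglyMeasurable
    · exact (aestronglyMeasurable_of_mellinConvergent hf).comp_snd
  rw [integrable_prod_iff' hmeas]
  constructor
  · filter_upwards [ae_restrict_mem measurableSet_Ioi] with u (hu : 0 < u)
    simp only [mellinTailKernel_eq_indicator_Iio]
    rw [integrable_indicator_iff measurableSet_Iio, IntegrableOn,
      Measure.restrict_restrict measurableSet_Iio, Iio_inter_Ioi]
    exact (integrableOn_Ioo_cpow_sub_one hs hu.le).smul_const (f u)
  · have hpow : IntegrableOn (fun u : ℝ => (u : ℂ) ^ s • f u) (Ioi 0) := by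
      simpa only [MellinConvergent, add_sub_cancel_right] using hf
    refine (hpow.norm.const_mul s.re⁻¹).congr ?_
    filter_upwards [ae_restrict_mem measurableSet_Ioi] with u hu
    exact (integral_norm_mellinTailKernel_left f hs hu).symm

theorem hasMellin_integral_Ioi [CompleteSpace E] {f : ℝ → E} {s : ℂ} (hs : 0 < s.re)
    (hf : MellinConvergent f (s + 1)) :
    HasMellin (fun y => ∫ u in Ioi y, f u) s (s⁻¹ • mellin f (s + 1)) := by
  have hK := integrable_mellinTailKernel hs hf
  have hright : ∀ y ∈ Ioi (0 : ℝ), ∫ u in Ioi 0, mellinTailKernel f s (y, u) =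
      (y : ℂ) ^ (s - 1) • ∫ u in Ioi y, f u :=
    fun y hy => integral_mellinTailKernel_right f s (le_of_lt hy)
  refine ⟨IntegrableOn.congr_fun hK.integral_prod_left hright measurableSet_Ioi, ?_⟩
  calc mellin (fun y => ∫ u in Ioi y, f u) s
      = ∫ y in Ioi 0, ∫ u in Ioi 0, mellinTailKernel f s (y, u) :=
        (setIntegral_congr_fun measurableSet_Ioi hright).symm
    _ = ∫ u in Ioi 0, ∫ y in Ioi 0, mellinTailKernel f s (y, u) :=
        integral_integral_swap (f := fun y u => mellinTailKernel f s (y, u)) hK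
    _ = ∫ u : ℝ in Ioi 0, s⁻¹ • (u : ℂ) ^ s • f u :=
        setIntegral_congr_fun measurableSet_Ioi
          fun u hu => integral_mellinTailKernel_left f hs (le_of_lt hu)
    _ = s⁻¹ • mellin f (s + 1) := by rw [integral_smul, mellin, add_sub_cancel_right]

theorem mellinInv_comp_div (F : ℂ → E) (σ : ℝ) {r : ℝ} (hr : r ≠ 0) {y : ℝ} (hy : 0 < y) :
    mellinInv σ (fun s => F (s / r)) y = |r| • mellinInv (σ / r) F (y ^ r) := by
  have hr' : (r : ℂ) ≠ 0 := ofReal_ne_zero.mpr hr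
  have hpow (w : ℂ) : (y : ℂ) ^ (-w) = ((y ^ r : ℝ) : ℂ) ^ (-(w / r)) := by
    rw [cpow_def_of_ne_zero (ofReal_ne_zero.mpr hy.ne'),
      cpow_def_of_ne_zero (ofReal_ne_zero.mpr (Real.rpow_pos_of_pos hy r).ne'), ← ofReal_log hy.le,
      ← ofReal_log (Real.rpow_pos_of_pos hy r).le, Real.log_rpow hy, ofReal_mul]
    field_simp
  have hline (t : ℝ) : (σ + t * I) / r = ((σ / r : ℝ) : ℂ) + ((t / r : ℝ) : ℂ) * I := by
    push_cast; ring
  simp only [mellinInv, hpow, hline]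
  rw [Measure.integral_comp_div (fun t : ℝ => ((y ^ r : ℝ) : ℂ) ^ (-(((σ / r : ℝ) : ℂ) + t * I)) •
    F (((σ / r : ℝ) : ℂ) + t * I)) r, smul_comm]

end MellinTransform

section GammaFunction

open MeasureTheory

lemma norm_Gamma_le_Gamma_re {s : ℂ} (hs : 0 < s.re) : ‖Complex.Gamma s‖ ≤ Real.Gamma s.re := by
  rw [Complex.Gamma_eq_integral hs, Real.Gamma_eq_integral hs, Complex.GammaIntegral]
  refine (norm_integral_le_integral_norm _).trans_eq
    (setIntegral_congr_fun measurableSet_Ioi fun t ht => ?_)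
  rw [norm_mul, norm_cpow_eq_rpow_re_of_pos ht, Complex.norm_of_nonneg (Real.exp_nonneg _), sub_re,
    one_re]

lemma norm_Gamma_le_Gamma_add_one_div_norm {s : ℂ} (hs : 0 < s.re) :
    ‖Complex.Gamma s‖ ≤ Real.Gamma (s.re + 1) / ‖s‖ := by
  have hs0 : s ≠ 0 := ne_zero_of_re_pos hs
  have hle := norm_Gamma_le_Gamma_re (s := s + 1) (by rw [add_re, one_re]; positivity)
  rw [Complex.Gamma_add_one s hs0, norm_mul, add_re, one_re] at hle
  rwa [le_div_iff₀' (norm_pos_iff.mpr hs0)]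

lemma integrable_inv_norm_add_mul_I_sq {c : ℝ} (hc : c ≠ 0) :
    Integrable fun t : ℝ => (‖(c + t * I : ℂ)‖ ^ 2)⁻¹ := by
  refine ((integrable_inv_one_add_sq.comp_div hc).const_mul (c ^ 2)⁻¹).congr
    (.of_forall fun t => ?_)
  simp only
  rw [← mul_inv, ← normSq_eq_norm_sq, normSq_add_mul_I]
  congr 1
  field_simp

lemma continuousAt_Gamma_of_re_pos {s : ℂ} (hs : 0 < s.re) : ContinuousAt Complex.Gamma s := by
  refine (Complex.differentiableAt_Gamma s fun m hm => hs.not_ge ?_).continuousAt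
  simp [hm]

lemma norm_Gamma_div_le_add_inv_sq {z s : ℂ} (hz : 0 < z.re) :
    ‖Complex.Gamma z / s‖ ≤ Real.Gamma (z.re + 1) * ((‖z‖ ^ 2)⁻¹ + (‖s‖ ^ 2)⁻¹) := by
  have hamgm : ‖z‖⁻¹ * ‖s‖⁻¹ ≤ (‖z‖ ^ 2)⁻¹ + (‖s‖ ^ 2)⁻¹ := by
    rw [← inv_pow, ← inv_pow]
    nlinarith [sq_nonneg (‖z‖⁻¹ - ‖s‖⁻¹), sq_nonneg (‖z‖⁻¹ + ‖s‖⁻¹)]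
  calc ‖Complex.Gamma z / s‖ ≤ Real.Gamma (z.re + 1) / ‖z‖ / ‖s‖ := by
        rw [norm_div]
        gcongr
        exact norm_Gamma_le_Gamma_add_one_div_norm hz
    _ = Real.Gamma (z.re + 1) * (‖z‖⁻¹ * ‖s‖⁻¹) := by ring
    _ ≤ Real.Gamma (z.re + 1) * ((‖z‖ ^ 2)⁻¹ + (‖s‖ ^ 2)⁻¹) := by
        exact mul_le_mul_of_nonneg_left hamgm (Real.Gamma_nonneg_of_nonneg (by linarith))

theorem verticalIntegrable_Gamma_add_div {a : ℂ} {σ : ℝ} (hσ : σ ≠ 0) (ha : 0 < σ + a.re) :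
    VerticalIntegrable (fun s => Complex.Gamma (s + a) / s) σ := by
  have hre (t : ℝ) : (σ + t * I + a).re = σ + a.re := by simp
  have hshift (t : ℝ) : σ + t * I + a = ((σ + a.re : ℝ) : ℂ) + ((t + a.im : ℝ) : ℂ) * I := by
    apply Complex.ext <;> simp
  have hne (t : ℝ) : (σ + t * I : ℂ) ≠ 0 := fun h => hσ (by simpa using congrArg re h)
  have hcont : Continuous fun t : ℝ => Complex.Gamma (σ + t * I + a) / (σ + t * I) := by
    refine .div (continuous_iff_continuousAt.mpr fun t => ?_) (by fun_prop) hne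
    exact (continuousAt_Gamma_of_re_pos (by rwa [hre])).comp
      (f := fun t : ℝ => (σ + t * I + a : ℂ)) (by fun_prop)
  have hbound : Integrable fun t : ℝ =>
      Real.Gamma (σ + a.re + 1) * ((‖(σ + t * I + a : ℂ)‖ ^ 2)⁻¹ + (‖(σ + t * I : ℂ)‖ ^ 2)⁻¹) := by
    simp only [hshift]
    exact (((integrable_inv_norm_add_mul_I_sq ha.ne').comp_add_right a.im).add
      (integrable_inv_norm_add_mul_I_sq hσ)).const_mul _
  refine hbound.mono' hcont.aestronglyMeasurable (.of_forall fun t => ?_)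
  simpa only [hre] using norm_Gamma_div_le_add_inv_sq (s := σ + t * I)
    (z := σ + t * I + a) (by rwa [hre])

end GammaFunction

section IncompleteGamma

open MeasureTheory Set

/-- The upper incomplete Gamma function `Γ(a, y) = ∫_y^∞ e^(-u) u^(a-1) du`, the complement of
`Complex.partialGamma`. -/
noncomputable def upperGamma (a : ℂ) (y : ℝ) : ℂ :=
  ∫ u in Ioi y, ↑(Real.exp (-u)) * (u : ℂ) ^ (a - 1)

theorem Gamma_sub_upperGamma {a : ℂ} (ha : 0 < a.re) {y : ℝ} (hy : 0 ≤ y) :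
    Complex.Gamma a - upperGamma a y = partialGamma a y := by
  rw [Complex.Gamma_eq_integral ha]
  exact intervalIntegral.integral_Ioi_sub_Ioi (GammaIntegral_convergent ha) hy

lemma norm_partialGamma_le {a : ℂ} (ha : 0 < a.re) {y : ℝ} (hy : 0 ≤ y) :
    ‖partialGamma a y‖ ≤ y ^ a.re / a.re := by
  have hint : IntervalIntegrable (fun u : ℝ => u ^ (a.re - 1)) volume 0 y :=
    intervalIntegral.intervalIntegrable_rpow' (by linarith)
  have hle : ∀ u ∈ Ioc 0 y, ‖(Real.exp (-u) : ℂ) * (u : ℂ) ^ (a - 1)‖ ≤ u ^ (a.re - 1) := by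
    intro u hu
    rw [norm_mul, norm_cpow_eq_rpow_re_of_pos hu.1, Complex.norm_of_nonneg (Real.exp_nonneg _),
      sub_re, one_re]
    exact mul_le_of_le_one_left (Real.rpow_nonneg hu.1.le _)
      (Real.exp_le_one_iff.mpr (by linarith [hu.1]))
  calc ‖partialGamma a y‖ ≤ ∫ u in 0..y, u ^ (a.re - 1) :=
        intervalIntegral.norm_integral_le_of_norm_le hy (.of_forall hle) hint
    _ = y ^ a.re / a.re := by
        rw [integral_rpow (.inl (by linarith)), sub_add_cancel, Real.zero_rpow ha.ne', sub_zero]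

lemma continuousAt_upperGamma {a : ℂ} (ha : 0 < a.re) {y : ℝ} (hy : 0 < y) :
    ContinuousAt (upperGamma a) y :=
  (GammaIntegral_convergent ha).continuousOn_Ici_primitive_Ioi.continuousAt (Ici_mem_nhds hy)

theorem hasMellin_upperGamma {a s : ℂ} (hs : 0 < s.re) (ha : 0 < (s + a).re) :
    HasMellin (upperGamma a) s (Complex.Gamma (s + a) / s) := by
  have hexp : MellinConvergent (fun u => (Real.exp (-u) : ℂ)) (s + a) := by
    simpa only [MellinConvergent, smul_eq_mul, mul_comm] using GammaIntegral_convergent ha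
  have hsa : s + 1 + (a - 1) = s + a := by ring
  have hconv : MellinConvergent (fun u : ℝ => (u : ℂ) ^ (a - 1) • (Real.exp (-u) : ℂ)) (s + 1) := by
    rwa [MellinConvergent.cpow_smul, hsa]
  have htail : upperGamma a =
      fun y => ∫ u : ℝ in Ioi y, (u : ℂ) ^ (a - 1) • (Real.exp (-u) : ℂ) := by
    funext y
    simp only [upperGamma, smul_eq_mul, mul_comm]
  have hmellin : mellin (fun u : ℝ => (u : ℂ) ^ (a - 1) • (Real.exp (-u) : ℂ)) (s + 1) =
      Complex.Gamma (s + a) := by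
    rw [mellin_cpow_smul, hsa, ← GammaIntegral_eq_mellin, ← Complex.Gamma_eq_integral ha]
  rw [htail, div_eq_inv_mul, ← hmellin]
  exact hasMellin_integral_Ioi hs hconv

theorem mellinInv_Gamma_add_div {a : ℂ} (ha : 0 < a.re) {σ : ℝ} (hσ : 0 < σ) {y : ℝ} (hy : 0 < y) :
    mellinInv σ (fun s => Complex.Gamma (s + a) / s) y = upperGamma a y := by
  have hmellin (t : ℝ) : HasMellin (upperGamma a) (σ + t * I)
      (Complex.Gamma (σ + t * I + a) / (σ + t * I)) :=
    hasMellin_upperGamma (by simpa using hσ) (by simpa using by positivity)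
  have hconv : MellinConvergent (upperGamma a) σ := by simpa using (hmellin 0).1
  have hvert : VerticalIntegrable (mellin (upperGamma a)) σ := by
    simpa only [VerticalIntegrable, (hmellin _).2] using
      verticalIntegrable_Gamma_add_div hσ.ne' (by positivity : 0 < σ + a.re)
  calc mellinInv σ (fun s => Complex.Gamma (s + a) / s) y
      = mellinInv σ (mellin (upperGamma a)) y := by simp only [mellinInv, (hmellin _).2]
    _ = upperGamma a y :=
        mellinInv_mellin_eq σ _ hy hconv hvert (continuousAt_upperGamma ha hy)

end IncompleteGamma

section WeightFunction

theorem V₁_eq_mellinInv (x : ℝ) :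
    V₁ x = (2 * Complex.Gamma (1 / 4))⁻¹ *
      mellinInv 1 (fun s => Complex.Gamma (s / 2 + 1 / 4) / (s / 2)) (√Real.pi * x) := by
  have harg (s : ℂ) : s / 2 + 1 / 4 = (2 * s + 1) / 4 := by ring
  simp only [V₁, mellinInv, harg, real_smul, smul_eq_mul]
  rw [mul_left_comm]
  push_cast
  congr 1
  rw [← MeasureTheory.integral_const_mul]
  congr 1
  funext t
  field_simp

theorem V₁_eq_upperGamma {x : ℝ} (hx : 0 < x) :
    V₁ x = upperGamma (1 / 4) (Real.pi * x ^ 2) / Complex.Gamma (1 / 4) := by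
  have hsq : (√Real.pi * x) ^ (2 : ℝ) = Real.pi * x ^ 2 := by
    rw [Real.rpow_two, mul_pow, Real.sq_sqrt Real.pi_nonneg]
  have hrescale : mellinInv 1 (fun s => Complex.Gamma (s / 2 + 1 / 4) / (s / 2)) (√Real.pi * x) =
      2 * upperGamma (1 / 4) (Real.pi * x ^ 2) := by
    have h := mellinInv_comp_div (fun s => Complex.Gamma (s + 1 / 4) / s) 1 two_ne_zero
      (by positivity : 0 < √Real.pi * x)
    rw [hsq, mellinInv_Gamma_add_div (by norm_num) one_half_pos (by positivity)] at h
    simpa only [ofReal_ofNat, Nat.abs_ofNat, real_smul] using h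
  rw [V₁_eq_mellinInv, hrescale]
  field_simp

theorem stmt3_general {x : ℝ} (hx : 0 < x) :
    ‖V₁ x - 1‖ ≤ 4 * Real.pi ^ (1 / 4 : ℝ) / Real.Gamma (1 / 4) * x ^ (1 / 2 : ℝ) := by
  have hΓ : 0 < Real.Gamma (1 / 4) := Real.Gamma_pos_of_pos (by norm_num)
  have hΓc : Complex.Gamma (1 / 4) = (Real.Gamma (1 / 4) : ℝ) := by
    rw [← Complex.Gamma_ofReal]; norm_num
  have hy : 0 ≤ Real.pi * x ^ 2 := by positivity
  have hre : (1 / 4 : ℂ).re = 1 / 4 := by norm_num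
  have hsub : V₁ x - 1 = -(partialGamma (1 / 4) (Real.pi * x ^ 2) / Real.Gamma (1 / 4)) := by
    rw [V₁_eq_upperGamma hx, ← Gamma_sub_upperGamma (by norm_num) hy, hΓc, sub_div,
      div_self (ofReal_ne_zero.mpr hΓ.ne'), neg_sub]
  calc ‖V₁ x - 1‖ = ‖partialGamma (1 / 4) (Real.pi * x ^ 2)‖ / Real.Gamma (1 / 4) := by
        rw [hsub, norm_neg, norm_div, Complex.norm_of_nonneg hΓ.le]
    _ ≤ (Real.pi * x ^ 2) ^ (1 / 4 : ℝ) / (1 / 4) / Real.Gamma (1 / 4) := by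
        gcongr
        simpa only [hre] using norm_partialGamma_le (a := 1 / 4) (by norm_num) hy
    _ = 4 * Real.pi ^ (1 / 4 : ℝ) / Real.Gamma (1 / 4) * x ^ (1 / 2 : ℝ) := by
        rw [Real.mul_rpow Real.pi_nonneg (sq_nonneg x), ← Real.rpow_natCast_mul hx.le]
        norm_num
        ring

end WeightFunction

/-- **`V₁(x) ∼ 1` for small `x`.** For every `δ ∈ (0, 1/2)` there is `K > 0` such that
`|V₁(x) - 1| ≤ K · x^{1/2 - δ}` for all `0 < x ≤ 1`. -/
theorem stmt3 (δ : ℝ) (hδ : δ ∈ Set.Ioo 0 (1 / 2 : ℝ)) :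
    ∃ K > 0, ∀ x : ℝ, 0 < x → x ≤ 1 →
      ‖V₁ x - 1‖ ≤ K * x ^ (1 / 2 - δ) := by
  have hK : 0 < 4 * Real.pi ^ (1 / 4 : ℝ) / Real.Gamma (1 / 4) := by positivity
  exact ⟨_, hK, fun x hx hx1 => (stmt3_general hx).trans <| mul_le_mul_of_nonneg_left
    (Real.rpow_le_rpow_of_exponent_ge hx hx1 (by linarith [hδ.1])) hK.le⟩
end

section
/- For every ε ∈ (0, 1/4) there exists a constant C > 0 such that for every prime q, Σ (nm)^{−1/2} ≤ C · q^{−1/4 + ε}, where the sum runs over all pairs of positive integers (n, m) with n ≤ q^{1+ε}, m ≤ q^{1/2+ε}, and q dividing n + m. -/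
/-!
Split the pairs according to which of `n`, `m` is larger, say `m ≤ n`, and write `n + m = k q`.
Then `n ≥ k q / 2`, so the summand is at most `(q / 2) ^ (-s) * k ^ (-s) * m ^ (-s)`. Since
`k q ≤ 2 n`, the pairs `(k, m)` fill at most a box of sides `2 N / q` and `M`, over which the sum
factors into two partial sums of `∑ k ^ (-s)`. This gives the expected order `(N M) ^ (1 - s) / q`
for all cutoffs `N`, `M`; the theorem is the case `s = 1 / 2`.
-/

open Finset

/-- The pairs `(n, m)` of positive integers with `n ≤ N`, `m ≤ M` and `n ≡ -m` modulo `q`: the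
index set of the sums under study. The congruence is encoded as `q ∣ n + m`. -/
def oppositePairs (q N M : ℕ) : Finset (ℕ × ℕ) :=
  (Icc 1 N ×ˢ Icc 1 M).filter (fun p => q ∣ p.1 + p.2)

lemma mem_oppositePairs {q N M : ℕ} {p : ℕ × ℕ} :
    p ∈ oppositePairs q N M ↔ ((1 ≤ p.1 ∧ p.1 ≤ N) ∧ 1 ≤ p.2 ∧ p.2 ≤ M) ∧ q ∣ p.1 + p.2 := by
  simp only [oppositePairs, mem_filter, mem_product, mem_Icc]

lemma swap_mem_oppositePairs {q N M : ℕ} {p : ℕ × ℕ} :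
    p.swap ∈ oppositePairs q M N ↔ p ∈ oppositePairs q N M := by
  simp only [mem_oppositePairs, Prod.fst_swap, Prod.snd_swap, add_comm p.2,
    and_comm (a := 1 ≤ p.2 ∧ p.2 ≤ M)]

lemma injOn_quotient_oppositePairs (q N M : ℕ) :
    Set.InjOn (fun p : ℕ × ℕ => ((p.1 + p.2) / q, p.2)) (oppositePairs q N M) := by
  intro p hp r hr h
  obtain ⟨hquot, _⟩ := Prod.mk.inj h
  have hsum : p.1 + p.2 = r.1 + r.2 :=
    (Nat.div_left_inj (mem_oppositePairs.1 hp).2 (mem_oppositePairs.1 hr).2).1 hquot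
  ext <;> lia

lemma quotient_mem_box_of_mem_oppositePairs {q N M : ℕ} (hq : 0 < q) {p : ℕ × ℕ}
    (hp : p ∈ oppositePairs q N M) (hle : p.2 ≤ p.1) :
    ((p.1 + p.2) / q, p.2) ∈ Icc 1 (2 * N / q) ×ˢ Icc 1 M := by
  obtain ⟨⟨⟨_, hnN⟩, hm⟩, hdvd⟩ := mem_oppositePairs.1 hp
  refine mem_product.2 ⟨mem_Icc.2 ⟨?_, Nat.div_le_div_right (by lia)⟩, mem_Icc.2 hm⟩
  exact Nat.div_pos (Nat.le_of_dvd (by lia) hdvd) hq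

section

variable {s : ℝ}

/-- Bernoulli's inequality, homogenized so that the right-hand side telescopes. -/
lemma mul_rpow_neg_le_rpow_sub_rpow (hs0 : 0 ≤ s) (hs1 : s ≤ 1) {x : ℝ} (hx : 1 ≤ x) :
    (1 - s) * x ^ (-s) ≤ x ^ (1 - s) - (x - 1) ^ (1 - s) := by
  have hx0 : 0 < x := by linarith
  have hinv : x⁻¹ ≤ 1 := inv_le_one_of_one_le₀ hx
  have bernoulli : (1 + -x⁻¹) ^ (1 - s) ≤ 1 + (1 - s) * -x⁻¹ :=
    rpow_one_add_le_one_add_mul_self (by linarith) (by linarith) (by linarith)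
  have hpred : (x - 1) ^ (1 - s) ≤ x ^ (1 - s) - (1 - s) * x ^ (-s) :=
    calc (x - 1) ^ (1 - s) = x ^ (1 - s) * (1 + -x⁻¹) ^ (1 - s) := by
          rw [← Real.mul_rpow hx0.le (by linarith)]
          congr 1
          field_simp
          ring
      _ ≤ x ^ (1 - s) * (1 + (1 - s) * -x⁻¹) := by gcongr
      _ = x ^ (1 - s) - (1 - s) * x ^ (-s) := by
          rw [show 1 - s = -s + 1 by ring, Real.rpow_add_one hx0.ne']
          field_simp
          ring
  linarith

lemma sum_Icc_rpow_neg_le (hs0 : 0 ≤ s) (hs1 : s < 1) (K : ℕ) :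
    ∑ k ∈ Icc 1 K, (k : ℝ) ^ (-s) ≤ (K : ℝ) ^ (1 - s) / (1 - s) := by
  have hs : 0 < 1 - s := by linarith
  induction K with
  | zero => simp [Real.zero_rpow hs.ne']
  | succ K ih =>
    have hstep := mul_rpow_neg_le_rpow_sub_rpow hs0 hs1.le (x := (K + 1 : ℕ)) (by simp)
    rw [le_div_iff₀ hs] at ih ⊢
    rw [sum_Icc_succ_top (by lia), add_mul]
    rw [Nat.cast_add_one, add_sub_cancel_right] at hstep
    push_cast
    linarith

lemma mul_rpow_neg_le_of_mul_eq_add (hs : 0 ≤ s) {q n m k : ℕ} (hm : 0 < m)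
    (hle : m ≤ n) (hsum : q * k = n + m) :
    ((n * m : ℕ) : ℝ) ^ (-s) ≤ (q / 2 : ℝ) ^ (-s) * ((k : ℝ) ^ (-s) * (m : ℝ) ^ (-s)) := by
  have hhalf : (q / 2 * k : ℝ) ≤ n := by
    have : (q * k : ℝ) ≤ 2 * n := by exact_mod_cast (by lia : q * k ≤ 2 * n)
    linarith
  have hqk : (0 : ℝ) < q / 2 * k := by
    have : (0 : ℝ) < q * k := by exact_mod_cast (by lia : 0 < q * k)
    linarith
  rw [← Real.mul_rpow (by positivity) (by positivity),
    ← Real.mul_rpow (by positivity) (by positivity), ← mul_assoc, Nat.cast_mul]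
  refine Real.rpow_le_rpow_of_nonpos ?_ (by gcongr) (neg_nonpos.2 hs)
  exact mul_pos hqk (Nat.cast_pos.2 hm)

lemma sum_oppositePairs_snd_le_fst_le_mul_sum_mul_sum (hs : 0 ≤ s) {q : ℕ} (hq : 0 < q)
    (N M : ℕ) :
    ∑ p ∈ oppositePairs q N M with p.2 ≤ p.1, ((p.1 * p.2 : ℕ) : ℝ) ^ (-s) ≤
      (q / 2 : ℝ) ^ (-s) *
        ((∑ k ∈ Icc 1 (2 * N / q), (k : ℝ) ^ (-s)) * ∑ m ∈ Icc 1 M, (m : ℝ) ^ (-s)) := by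
  let quotient : ℕ × ℕ → ℕ × ℕ := fun p => ((p.1 + p.2) / q, p.2)
  let weight : ℕ × ℕ → ℝ := fun r => (r.1 : ℝ) ^ (-s) * (r.2 : ℝ) ^ (-s)
  set S := (oppositePairs q N M).filter fun p => p.2 ≤ p.1
  have hbound : ∀ p ∈ S,
      ((p.1 * p.2 : ℕ) : ℝ) ^ (-s) ≤ (q / 2 : ℝ) ^ (-s) * weight (quotient p) := by
    intro p hp
    obtain ⟨hp, hle⟩ := mem_filter.1 hp
    obtain ⟨⟨_, hm⟩, hdvd⟩ := mem_oppositePairs.1 hp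
    exact mul_rpow_neg_le_of_mul_eq_add hs hm.1 hle (Nat.mul_div_cancel' hdvd)
  have hinj : Set.InjOn quotient S :=
    (injOn_quotient_oppositePairs q N M).mono (coe_subset.2 (filter_subset _ _))
  have hbox : S.image quotient ⊆ Icc 1 (2 * N / q) ×ˢ Icc 1 M := image_subset_iff.2 fun p hp =>
    quotient_mem_box_of_mem_oppositePairs hq (mem_filter.1 hp).1 (mem_filter.1 hp).2
  calc ∑ p ∈ S, ((p.1 * p.2 : ℕ) : ℝ) ^ (-s)
      ≤ ∑ p ∈ S, (q / 2 : ℝ) ^ (-s) * weight (quotient p) := sum_le_sum hbound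
    _ = (q / 2 : ℝ) ^ (-s) * ∑ r ∈ S.image quotient, weight r := by
        rw [sum_image hinj, mul_sum]
    _ ≤ (q / 2 : ℝ) ^ (-s) * ∑ r ∈ Icc 1 (2 * N / q) ×ˢ Icc 1 M, weight r := by
        gcongr
    _ = (q / 2 : ℝ) ^ (-s) *
          ((∑ k ∈ Icc 1 (2 * N / q), (k : ℝ) ^ (-s)) * ∑ m ∈ Icc 1 M, (m : ℝ) ^ (-s)) := by
        rw [sum_mul_sum, sum_product]

lemma sum_oppositePairs_snd_le_fst_rpow_neg_le (hs0 : 0 ≤ s) (hs1 : s < 1) {q : ℕ} (hq : 0 < q)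
    (N M : ℕ) :
    ∑ p ∈ oppositePairs q N M with p.2 ≤ p.1, ((p.1 * p.2 : ℕ) : ℝ) ^ (-s) ≤
      2 / (1 - s) ^ 2 * ((N * M : ℝ) ^ (1 - s) / q) := by
  have hs : 0 < 1 - s := by linarith
  have hq' : (0 : ℝ) < q / 2 := by positivity
  have hside : ((2 * N / q : ℕ) : ℝ) ≤ N / (q / 2) :=
    Nat.cast_div_le.trans_eq (by push_cast; field_simp)
  calc ∑ p ∈ oppositePairs q N M with p.2 ≤ p.1, ((p.1 * p.2 : ℕ) : ℝ) ^ (-s)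
      ≤ (q / 2 : ℝ) ^ (-s) *
          ((∑ k ∈ Icc 1 (2 * N / q), (k : ℝ) ^ (-s)) * ∑ m ∈ Icc 1 M, (m : ℝ) ^ (-s)) :=
        sum_oppositePairs_snd_le_fst_le_mul_sum_mul_sum hs0 hq N M
    _ ≤ (q / 2 : ℝ) ^ (-s) *
          ((N / (q / 2) : ℝ) ^ (1 - s) / (1 - s) * ((M : ℝ) ^ (1 - s) / (1 - s))) := by
        gcongr
        · exact (sum_Icc_rpow_neg_le hs0 hs1 _).trans (by gcongr)
        · exact sum_Icc_rpow_neg_le hs0 hs1 M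
    _ = 2 / (1 - s) ^ 2 * ((N * M : ℝ) ^ (1 - s) / q) := by
        have hpow : (q / 2 : ℝ) ^ (1 - s) = (q / 2 : ℝ) ^ (-s) * (q / 2) := by
          rw [← Real.rpow_add_one hq'.ne', neg_add_eq_sub]
        rw [Real.div_rpow (by positivity) hq'.le, Real.mul_rpow (by positivity) (by positivity),
          hpow]
        field_simp

theorem sum_oppositePairs_rpow_neg_le (hs0 : 0 ≤ s) (hs1 : s < 1) {q : ℕ} (hq : 0 < q)
    (N M : ℕ) :
    ∑ p ∈ oppositePairs q N M, ((p.1 * p.2 : ℕ) : ℝ) ^ (-s) ≤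
      4 / (1 - s) ^ 2 * ((N * M : ℝ) ^ (1 - s) / q) := by
  have hswap : ∑ p ∈ oppositePairs q N M with p.1 ≤ p.2, ((p.1 * p.2 : ℕ) : ℝ) ^ (-s) =
      ∑ p ∈ oppositePairs q M N with p.2 ≤ p.1, ((p.1 * p.2 : ℕ) : ℝ) ^ (-s) := by
    refine sum_equiv (Equiv.prodComm ℕ ℕ) (fun p => ?_) fun p _ => ?_
    · rw [Equiv.prodComm_apply, mem_filter, mem_filter, swap_mem_oppositePairs, Prod.fst_swap,
        Prod.snd_swap]
    · rw [Equiv.prodComm_apply, Prod.fst_swap, Prod.snd_swap, mul_comm]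
  have hsplit : ∑ p ∈ oppositePairs q N M, ((p.1 * p.2 : ℕ) : ℝ) ^ (-s) ≤
      ∑ p ∈ oppositePairs q N M with p.2 ≤ p.1, ((p.1 * p.2 : ℕ) : ℝ) ^ (-s) +
        ∑ p ∈ oppositePairs q N M with p.1 ≤ p.2, ((p.1 * p.2 : ℕ) : ℝ) ^ (-s) := by
    rw [← sum_filter_add_sum_filter_not _ fun p => p.2 ≤ p.1]
    gcongr with p
    exact fun h => (not_le.1 h).le
  have hfst := sum_oppositePairs_snd_le_fst_rpow_neg_le hs0 hs1 hq N M
  have hsnd := sum_oppositePairs_snd_le_fst_rpow_neg_le hs0 hs1 hq M N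
  rw [mul_comm (M : ℝ)] at hsnd
  calc ∑ p ∈ oppositePairs q N M, ((p.1 * p.2 : ℕ) : ℝ) ^ (-s)
      ≤ 2 / (1 - s) ^ 2 * ((N * M : ℝ) ^ (1 - s) / q) +
          2 / (1 - s) ^ 2 * ((N * M : ℝ) ^ (1 - s) / q) :=
        hsplit.trans (add_le_add hfst (hswap.trans_le hsnd))
    _ = 4 / (1 - s) ^ 2 * ((N * M : ℝ) ^ (1 - s) / q) := by ring

end

theorem stmt8_general (ε : ℝ) {q : ℕ} (hq : 0 < q) :
    ∑ p ∈ (Finset.Icc 1 ⌊(q : ℝ) ^ (1 + ε)⌋₊ ×ˢ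
            Finset.Icc 1 ⌊(q : ℝ) ^ (1 / 2 + ε)⌋₊).filter (fun p => q ∣ p.1 + p.2),
        ((p.1 * p.2 : ℕ) : ℝ) ^ (-(1 / 2) : ℝ) ≤
      16 * (q : ℝ) ^ (-(1 / 4) + ε) := by
  have hq' : (0 : ℝ) < q := by exact_mod_cast hq
  refine (sum_oppositePairs_rpow_neg_le (by norm_num) (by norm_num) hq _ _).trans ?_
  calc 4 / (1 - 1 / 2 : ℝ) ^ 2 * ((⌊(q : ℝ) ^ (1 + ε)⌋₊ * ⌊(q : ℝ) ^ (1 / 2 + ε)⌋₊ : ℝ) ^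
          (1 - 1 / 2 : ℝ) / q)
      ≤ 4 / (1 - 1 / 2 : ℝ) ^ 2 * (((q : ℝ) ^ (1 + ε) * (q : ℝ) ^ (1 / 2 + ε)) ^
          (1 - 1 / 2 : ℝ) / q) := by
        gcongr
        · exact Nat.floor_le (by positivity)
        · exact Nat.floor_le (by positivity)
    _ = 16 * (q : ℝ) ^ (-(1 / 4) + ε) := by
        rw [← Real.rpow_add hq', ← Real.rpow_mul hq'.le, ← Real.rpow_sub_one hq'.ne']
        ring_nf

/-- For every `ε ∈ (0, 1/4)` there is `C > 0` such that for every prime `q`,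
`∑ (nm)^{-1/2} ≤ C q^{-1/4+ε}`, the sum over pairs of positive integers `(n, m)` with
`n ≤ q^{1+ε}`, `m ≤ q^{1/2+ε}` and `q ∣ n + m`. -/
theorem stmt8 (ε : ℝ) (hε : ε ∈ Set.Ioo 0 (1 / 4 : ℝ)) :
    ∃ C > 0, ∀ q : ℕ, q.Prime →
      ∑ p ∈ (Finset.Icc 1 ⌊(q : ℝ) ^ (1 + ε)⌋₊ ×ˢ
              Finset.Icc 1 ⌊(q : ℝ) ^ (1 / 2 + ε)⌋₊).filter (fun p => q ∣ p.1 + p.2),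
          ((p.1 * p.2 : ℕ) : ℝ) ^ (-(1 / 2) : ℝ) ≤
        C * (q : ℝ) ^ (-(1 / 4) + ε) :=
  ⟨16, by norm_num, fun _ hq => stmt8_general ε hq.pos⟩
end

section
/- Fix a real number T. For every δ ∈ (0, 1/2) there exists a constant K > 0 such that for all x with 0 < x ≤ 1 one has |V₂(x) − 1| ≤ K · x^{1/2 − δ}. -/
open Complex

/-- The weight function `V₂` (with spectral parameter `T`) from the approximate functional
equation for `L(1/2, f ⊗ χ)`:
`V₂(x) = (1/2πi) ∫_(1) (π x)^{-s} Γ((2s+1+2iT)/4) Γ((2s+1-2iT)/4) /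
(Γ((1+2iT)/4) Γ((1-2iT)/4)) ds/s`, the integral taken along the vertical line `Re s = 1`. -/
noncomputable def V₂ (T : ℝ) (x : ℝ) : ℂ :=
  (1 / (2 * Real.pi)) * ∫ t : ℝ,
    (((Real.pi * x : ℝ) : ℂ) ^ (-(1 + t * I))) *
      (Complex.Gamma ((2 * (1 + t * I) + 1 + 2 * I * T) / 4) *
        Complex.Gamma ((2 * (1 + t * I) + 1 - 2 * I * T) / 4) /
        (Complex.Gamma ((1 + 2 * I * T) / 4) * Complex.Gamma ((1 - 2 * I * T) / 4))) *
      (1 + t * I)⁻¹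

/-!
Shift the line of integration from `Re s = 1` to `Re s = -c` with `c = 1/2 - δ`. The gamma factors
have no pole in between since `c < 1/2`, so the simple pole of `1 / s` at `0` contributes exactly
`1`, and the shifted integral is `O((π x) ^ c)`.

For the residue, write `f s / s = (f s - f 0) / s + f 0 / s`. The first summand extends
holomorphically over `0`, so it contributes nothing by Cauchy's theorem on tall rectangles, while
the integral of `1 / s` over `Re s = σ`, `|Im s| ≤ R` tends to `π` or `-π` with the sign of `σ`.

No Stirling asymptotics are needed: `Γ z = Γ (z + 1) / z` and `|Γ z| ≤ Γ (Re z)` show that each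
gamma factor is `O(1 / |z|)` in vertical strips, hence square-integrable on vertical lines, so the
product of the two is integrable there.
-/

open MeasureTheory Filter Set
open scoped Topology Real

/-- The filter describing `|Im s| → ∞` inside the closed vertical strip `a ≤ Re s ≤ b`. Decay
along it is what makes the horizontal sides of a contour in the strip negligible. -/
def verticalStripInfty (a b : ℝ) : Filter ℂ :=
  comap (|im ·|) atTop ⊓ 𝓟 (re ⁻¹' Icc a b)

lemma verticalStripInfty_le_cobounded (a b : ℝ) :
    verticalStripInfty a b ≤ Bornology.cobounded ℂ := by
  rw [← comap_norm_atTop, ← tendsto_iff_comap]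
  exact tendsto_atTop_mono abs_im_le_norm (tendsto_comap.mono_left inf_le_left)

lemma tendsto_inv_add_verticalStripInfty (a b : ℝ) (w : ℂ) :
    Tendsto (fun s ↦ (s + w)⁻¹) (verticalStripInfty a b) (𝓝 0) :=
  tendsto_inv₀_cobounded.comp
    ((tendsto_add_const_cobounded w).mono_left (verticalStripInfty_le_cobounded a b))

section ContourShift

variable {E : Type*} [NormedAddCommGroup E] [NormedSpace ℂ E] {a b σ x : ℝ} {f : ℂ → E}

lemma tendsto_integral_horizontal (hab : a ≤ b) (hf : Tendsto f (verticalStripInfty a b) (𝓝 0)) :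
    Tendsto (fun y : ℝ ↦ ∫ x in a..b, f (x + y * I)) (cocompact ℝ) (𝓝 0) := by
  rw [tendsto_zero_iff_norm_tendsto_zero, Metric.tendsto_nhds]
  intro ε hε
  obtain ⟨c, hc, hcε⟩ : ∃ c > 0, c * |b - a| < ε := by
    refine ⟨ε / (|b - a| + 1), by positivity, ?_⟩
    rw [div_mul_eq_mul_div, div_lt_iff₀ (by positivity)]
    linarith
  have hsmall : ∀ᶠ r in atTop, ∀ s : ℂ, |s.im| = r → s.re ∈ Icc a b → ‖f s‖ < c := by
    have := (tendsto_zero_iff_norm_tendsto_zero.1 hf).eventually_lt_const hc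
    rwa [verticalStripInfty, eventually_inf_principal, eventually_comap] at this
  filter_upwards [(tendsto_norm_cocompact_atTop (E := ℝ)).eventually hsmall] with y hy
  simp only [dist_zero_right, norm_norm]
  refine (intervalIntegral.norm_integral_le_of_norm_le_const fun x hx ↦ ?_).trans_lt hcε
  rw [uIoc_of_le hab] at hx
  exact (hy _ (by simp) (by simpa using Ioc_subset_Icc_self hx)).le

lemma tendsto_integral_vertical_sub (hab : a ≤ b) (hd : DifferentiableOn ℂ f (re ⁻¹' Icc a b))
    (hf : Tendsto f (verticalStripInfty a b) (𝓝 0)) :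
    Tendsto (fun R : ℝ ↦ (∫ y in -R..R, f (b + y * I)) - ∫ y in -R..R, f (a + y * I))
      atTop (𝓝 0) := by
  have hh := tendsto_integral_horizontal hab hf
  rw [cocompact_eq_atBot_atTop, tendsto_sup] at hh
  have hlim := ((hh.1.comp tendsto_neg_atTop_atBot).sub hh.2).const_smul I
  rw [sub_zero, smul_zero] at hlim
  refine hlim.congr fun R ↦ ?_
  have hrect := integral_boundary_rect_eq_zero_of_differentiableOn f ⟨a, -R⟩ ⟨b, R⟩
    (hd.mono fun s hs ↦ by simpa only [uIcc_of_le hab] using hs.1)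
  dsimp only [Function.comp_def] at hrect ⊢
  rw [add_sub_assoc, ← smul_sub, add_eq_zero_iff_eq_neg] at hrect
  rw [hrect, smul_neg, smul_smul, I_mul_I, neg_smul, one_smul, neg_neg]

lemma ofReal_add_mul_I_ne_zero (hσ : σ ≠ 0) (y : ℝ) : (σ : ℂ) + y * I ≠ 0 :=
  fun h ↦ hσ (by simpa using congrArg re h)

lemma continuous_inv_ofReal_add_mul_I (hσ : σ ≠ 0) :
    Continuous fun y : ℝ ↦ ((σ : ℂ) + y * I)⁻¹ :=
  Continuous.inv₀ (by fun_prop) (ofReal_add_mul_I_ne_zero hσ)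

lemma integral_inv_ofReal_add_mul_I (hσ : σ ≠ 0) (R : ℝ) :
    ∫ y in -R..R, ((σ : ℂ) + y * I)⁻¹ = (2 * Real.arctan (R / σ) : ℝ) := by
  have hcont := continuous_inv_ofReal_add_mul_I hσ
  have hcont' : Continuous fun y : ℝ ↦ ((σ : ℂ) + (-y : ℝ) * I)⁻¹ := hcont.comp continuous_neg
  have hreflect : ∫ y in -R..R, ((σ : ℂ) + (-y : ℝ) * I)⁻¹ = ∫ y in -R..R, ((σ : ℂ) + y * I)⁻¹ := by
    simpa using intervalIntegral.integral_comp_neg (a := -R) (b := R)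
      fun y : ℝ ↦ ((σ : ℂ) + y * I)⁻¹
  have heven (y : ℝ) : ((σ : ℂ) + y * I)⁻¹ + ((σ : ℂ) + (-y : ℝ) * I)⁻¹ =
      (2 * (σ / (σ ^ 2 + y ^ 2)) : ℝ) := by
    have hconj : (σ : ℂ) + (-y : ℝ) * I = starRingEnd ℂ (σ + y * I) := by simp
    rw [hconj, ← map_inv₀, add_conj, inv_re, normSq_add_mul_I]
    simp
  have hdouble : 2 * ∫ y in -R..R, ((σ : ℂ) + y * I)⁻¹ = 2 * (2 * Real.arctan (R / σ) : ℝ) := by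
    calc 2 * ∫ y in -R..R, ((σ : ℂ) + y * I)⁻¹
        = ∫ y in -R..R, (((σ : ℂ) + y * I)⁻¹ + ((σ : ℂ) + (-y : ℝ) * I)⁻¹) := by
          rw [intervalIntegral.integral_add (hcont.intervalIntegrable _ _)
            (hcont'.intervalIntegrable _ _), hreflect, two_mul]
      _ = 2 * (2 * Real.arctan (R / σ) : ℝ) := by
          simp only [heven]
          rw [intervalIntegral.integral_ofReal, intervalIntegral.integral_const_mul,
            integral_div_sq_add_sq, neg_div, Real.arctan_neg]
          push_cast
          ring
  exact mul_left_cancel₀ two_ne_zero hdouble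

lemma tendsto_integral_inv_ofReal_add_mul_I (hσ : σ ≠ 0) :
    Tendsto (fun R : ℝ ↦ ∫ y in -R..R, ((σ : ℂ) + y * I)⁻¹) atTop (𝓝 (π * σ.sign : ℝ)) := by
  simp only [integral_inv_ofReal_add_mul_I hσ]
  refine (continuous_ofReal.tendsto _).comp ?_
  rcases hσ.lt_or_gt with hneg | hpos
  · rw [Real.sign_of_neg hneg, show π * -1 = 2 * -(π / 2) by ring]
    exact ((Real.tendsto_arctan_atBot.mono_right nhdsWithin_le_nhds).comp
      (tendsto_id.atTop_div_const_of_neg hneg)).const_mul 2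
  · rw [Real.sign_of_pos hpos, show π * 1 = 2 * (π / 2) by ring]
    exact ((Real.tendsto_arctan_atTop.mono_right nhdsWithin_le_nhds).comp
      (tendsto_id.atTop_div_const hpos)).const_mul 2

lemma dslope_zero_eq_inv_smul_sub {s : ℂ} (hs : s ≠ 0) :
    dslope f 0 s = s⁻¹ • f s - s⁻¹ • f 0 := by
  rw [dslope_of_ne _ hs, slope_def_module, sub_zero, smul_sub]

lemma tendsto_dslope_zero_verticalStripInfty
    (hf : Tendsto (fun s ↦ s⁻¹ • f s) (verticalStripInfty a b) (𝓝 0)) :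
    Tendsto (dslope f 0) (verticalStripInfty a b) (𝓝 0) := by
  have hlim := hf.sub ((tendsto_inv_add_verticalStripInfty a b 0).smul_const (f 0))
  simp only [add_zero, zero_smul, sub_zero] at hlim
  refine hlim.congr' ?_
  filter_upwards [verticalStripInfty_le_cobounded a b (Bornology.eventually_ne_cobounded 0)]
    with s hs using (dslope_zero_eq_inv_smul_sub hs).symm

lemma tendsto_integral_dslope_zero_vertical [CompleteSpace E] (hσ : σ ≠ 0)
    (hint : VerticalIntegrable (fun s ↦ s⁻¹ • f s) σ) :
    Tendsto (fun R : ℝ ↦ ∫ y in -R..R, dslope f 0 (σ + y * I)) atTop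
      (𝓝 ((∫ y : ℝ, ((σ : ℂ) + y * I)⁻¹ • f (σ + y * I)) - (π * σ.sign : ℝ) • f 0)) := by
  have hmain := intervalIntegral_tendsto_integral hint tendsto_neg_atTop_atBot tendsto_id
  have hpole := (tendsto_integral_inv_ofReal_add_mul_I hσ).smul_const (f 0)
  refine (hmain.sub hpole).congr fun R ↦ ?_
  have hinv : Continuous fun y : ℝ ↦ ((σ : ℂ) + y * I)⁻¹ • f 0 :=
    (continuous_inv_ofReal_add_mul_I hσ).smul continuous_const
  simp only [dslope_zero_eq_inv_smul_sub (ofReal_add_mul_I_ne_zero hσ _)]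
  rw [intervalIntegral.integral_sub hint.intervalIntegrable (hinv.intervalIntegrable _ _),
    intervalIntegral.integral_smul_const, id_eq]

theorem integral_inv_smul_vertical_sub [CompleteSpace E] (ha : a < 0) (hb : 0 < b)
    (hd : DifferentiableOn ℂ f (re ⁻¹' Icc a b))
    (hf : Tendsto (fun s ↦ s⁻¹ • f s) (verticalStripInfty a b) (𝓝 0))
    (hinta : VerticalIntegrable (fun s ↦ s⁻¹ • f s) a)
    (hintb : VerticalIntegrable (fun s ↦ s⁻¹ • f s) b) :
    (∫ y : ℝ, ((b : ℂ) + y * I)⁻¹ • f (b + y * I)) -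
      ∫ y : ℝ, ((a : ℂ) + y * I)⁻¹ • f (a + y * I) = (2 * π) • f 0 := by
  have hstrip : re ⁻¹' Icc a b ∈ 𝓝 (0 : ℂ) :=
    continuous_re.continuousAt (Icc_mem_nhds (by simpa using ha) (by simpa using hb))
  have hshift := tendsto_integral_vertical_sub (ha.trans hb).le
    ((differentiableOn_dslope hstrip).2 hd) (tendsto_dslope_zero_verticalStripInfty hf)
  have heq := tendsto_nhds_unique hshift
    ((tendsto_integral_dslope_zero_vertical hb.ne' hintb).sub
      (tendsto_integral_dslope_zero_vertical ha.ne hinta))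
  rw [Real.sign_of_pos hb, Real.sign_of_neg ha, sub_sub_sub_comm, ← sub_smul, eq_comm,
    sub_eq_zero] at heq
  rw [heq]
  congr 1
  ring

lemma norm_cpow_neg_ofReal_add_mul_I (hx : 0 < x) (σ y : ℝ) :
    ‖(x : ℂ) ^ (-((σ : ℂ) + y * I))‖ = x ^ (-σ) := by
  simp [norm_cpow_eq_rpow_re_of_pos hx]

lemma verticalIntegrable_cpow_neg_smul (hx : 0 < x) (hf : VerticalIntegrable f σ) :
    VerticalIntegrable (fun s ↦ (x : ℂ) ^ (-s) • f s) σ := by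
  have hcont : Continuous fun y : ℝ ↦ (x : ℂ) ^ (-((σ : ℂ) + y * I)) :=
    Continuous.const_cpow (by fun_prop) (Or.inl (ofReal_ne_zero.2 hx.ne'))
  exact hf.bdd_smul (x ^ (-σ)) hcont.aestronglyMeasurable
    (Eventually.of_forall fun y ↦ (norm_cpow_neg_ofReal_add_mul_I hx σ y).le)

lemma tendsto_cpow_neg_smul_verticalStripInfty (hx : 0 < x)
    (hf : Tendsto f (verticalStripInfty a b) (𝓝 0)) :
    Tendsto (fun s ↦ (x : ℂ) ^ (-s) • f s) (verticalStripInfty a b) (𝓝 0) := by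
  have hcont : Continuous fun u : ℝ ↦ x ^ (-u) :=
    continuous_const.rpow continuous_neg fun _ ↦ Or.inl hx.ne'
  obtain ⟨M, hM⟩ := isCompact_Icc.exists_bound_of_continuousOn (hcont.continuousOn (s := Icc a b))
  refine IsBoundedUnder.smul_tendsto_zero ⟨M, ?_⟩ hf
  rw [eventually_map]
  filter_upwards [mem_inf_of_right (mem_principal_self (re ⁻¹' Icc a b))] with s hs
  rw [Function.comp_apply, norm_cpow_eq_rpow_re_of_pos hx, neg_re]
  exact (le_abs_self _).trans (hM s.re hs)

theorem mellinInv_inv_smul_sub [CompleteSpace E] (ha : a < 0) (hb : 0 < b) (hx : 0 < x)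
    (hd : DifferentiableOn ℂ f (re ⁻¹' Icc a b))
    (hf : Tendsto (fun s ↦ s⁻¹ • f s) (verticalStripInfty a b) (𝓝 0))
    (hinta : VerticalIntegrable (fun s ↦ s⁻¹ • f s) a)
    (hintb : VerticalIntegrable (fun s ↦ s⁻¹ • f s) b) :
    mellinInv b (fun s ↦ s⁻¹ • f s) x - mellinInv a (fun s ↦ s⁻¹ • f s) x = f 0 := by
  have hx0 : (x : ℂ) ≠ 0 := ofReal_ne_zero.2 hx.ne'
  have hcpow : Differentiable ℂ fun s : ℂ ↦ (x : ℂ) ^ (-s) :=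
    fun s ↦ DifferentiableAt.const_cpow differentiableAt_id.neg (Or.inl hx0)
  have hcomm (s : ℂ) : (x : ℂ) ^ (-s) • s⁻¹ • f s = s⁻¹ • (x : ℂ) ^ (-s) • f s :=
    smul_comm _ _ _
  have hf' := tendsto_cpow_neg_smul_verticalStripInfty hx hf
  have hinta' := verticalIntegrable_cpow_neg_smul hx hinta
  have hintb' := verticalIntegrable_cpow_neg_smul hx hintb
  simp only [hcomm] at hf' hinta' hintb'
  have hres := integral_inv_smul_vertical_sub ha hb (hcpow.differentiableOn.smul hd)
    hf' hinta' hintb'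
  simp only [Pi.smul_apply', neg_zero, cpow_zero, one_smul] at hres
  simp only [mellinInv, hcomm]
  rw [← smul_sub, hres, smul_smul, one_div_mul_cancel Real.two_pi_pos.ne', one_smul]

lemma norm_mellinInv_le (hx : 0 < x) (σ : ℝ) (f : ℂ → E) :
    ‖mellinInv σ f x‖ ≤ x ^ (-σ) * ((2 * π)⁻¹ * ∫ y : ℝ, ‖f (σ + y * I)‖) := by
  have hnorm (y : ℝ) : ‖(x : ℂ) ^ (-((σ : ℂ) + y * I)) • f (σ + y * I)‖ =
      x ^ (-σ) * ‖f (σ + y * I)‖ := by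
    rw [norm_smul, norm_cpow_neg_ofReal_add_mul_I hx]
  calc ‖mellinInv σ f x‖
      = (2 * π)⁻¹ * ‖∫ y : ℝ, (x : ℂ) ^ (-((σ : ℂ) + y * I)) • f (σ + y * I)‖ := by
        rw [mellinInv, norm_smul, Real.norm_of_nonneg (by positivity), one_div]
    _ ≤ (2 * π)⁻¹ * ∫ y : ℝ, x ^ (-σ) * ‖f (σ + y * I)‖ := by
        simp only [← hnorm]
        gcongr
        exact norm_integral_le_integral_norm _
    _ = x ^ (-σ) * ((2 * π)⁻¹ * ∫ y : ℝ, ‖f (σ + y * I)‖) := by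
        rw [integral_const_mul]
        ring

end ContourShift

section GammaFactor

variable {κ κ' : ℂ} {a b σ : ℝ}

lemma norm_Gamma_le_Gamma_re_s13 {z : ℂ} (hz : 0 < z.re) : ‖Gamma z‖ ≤ Real.Gamma z.re := by
  rw [Gamma_eq_integral hz, Real.Gamma_eq_integral hz, GammaIntegral]
  refine (norm_integral_le_integral_norm _).trans_eq (setIntegral_congr_fun measurableSet_Ioi ?_)
  intro t ht
  dsimp only
  rw [norm_mul, norm_cpow_eq_rpow_re_of_pos ht, Complex.norm_of_nonneg (Real.exp_pos _).le,
    sub_re, one_re]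

lemma norm_Gamma_le_Gamma_re_add_one_mul_norm_inv {z : ℂ} (hz : 0 < z.re) :
    ‖Gamma z‖ ≤ Real.Gamma (z.re + 1) * ‖z⁻¹‖ := by
  have hne : z ≠ 0 := fun h ↦ by simp [h] at hz
  have hshift : Gamma z = Gamma (z + 1) * z⁻¹ := by
    rw [Gamma_add_one z hne]
    field_simp
  rw [hshift, norm_mul]
  gcongr
  simpa using norm_Gamma_le_Gamma_re_s13 (z := z + 1) (by simpa using by linarith)

lemma exists_norm_Gamma_le_mul_norm_inv (ha : 0 < a) (b : ℝ) :
    ∃ C, ∀ z : ℂ, z.re ∈ Icc a b → ‖Gamma z‖ ≤ C * ‖z⁻¹‖ := by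
  refine ⟨max (Real.Gamma (a + 1)) (Real.Gamma (b + 1)), fun z hz ↦ ?_⟩
  refine (norm_Gamma_le_Gamma_re_add_one_mul_norm_inv (ha.trans_le hz.1)).trans ?_
  gcongr
  exact Real.convexOn_Gamma.le_max_of_mem_Icc (mem_Ioi.2 (by linarith))
    (mem_Ioi.2 (by linarith [hz.1, hz.2])) ⟨by linarith [hz.1], by linarith [hz.2]⟩

/-- The gamma factor `Γ((s + κ) / 2)`, normalised to take the value `1` at `s = 0`. The weight in
`V₂ T` is the product of the two factors with `κ = 1/2 ± iT`. -/
noncomputable def gammaRatio (κ s : ℂ) : ℂ :=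
  Gamma ((s + κ) / 2) / Gamma (κ / 2)

lemma gammaRatio_zero (hκ : 0 < κ.re) : gammaRatio κ 0 = 1 := by
  rw [gammaRatio, zero_add]
  exact div_self (Gamma_ne_zero_of_re_pos (by simpa using hκ))

lemma differentiableAt_gammaRatio {s : ℂ} (hs : 0 < (s + κ).re) :
    DifferentiableAt ℂ (gammaRatio κ) s := by
  have hpole (m : ℕ) : (s + κ) / 2 ≠ -m := fun h ↦ by
    have hre : (s + κ).re / 2 = -m := by simpa using congrArg re h
    linarith [m.cast_nonneg (α := ℝ)]
  have hcomp : DifferentiableAt ℂ (fun s ↦ Gamma ((s + κ) / 2)) s :=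
    (differentiableAt_Gamma _ hpole).comp s (by fun_prop)
  exact hcomp.div_const _

lemma differentiableOn_gammaRatio (ha : 0 < a + κ.re) (b : ℝ) :
    DifferentiableOn ℂ (gammaRatio κ) (re ⁻¹' Icc a b) := fun s hs ↦
  (differentiableAt_gammaRatio (by
    rw [add_re]
    linarith [hs.1])).differentiableWithinAt

lemma exists_norm_gammaRatio_le (ha : 0 < a + κ.re) (b : ℝ) :
    ∃ C, ∀ s : ℂ, s.re ∈ Icc a b → ‖gammaRatio κ s‖ ≤ C * ‖(s + κ)⁻¹‖ := by
  obtain ⟨C, hC⟩ := exists_norm_Gamma_le_mul_norm_inv (half_pos ha) ((b + κ.re) / 2)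
  refine ⟨C * 2 / ‖Gamma (κ / 2)‖, fun s hs ↦ ?_⟩
  have hmem : ((s + κ) / 2).re ∈ Icc ((a + κ.re) / 2) ((b + κ.re) / 2) := by
    rw [div_ofNat_re, add_re]
    constructor <;> linarith [hs.1, hs.2]
  calc ‖gammaRatio κ s‖ = ‖Gamma ((s + κ) / 2)‖ / ‖Gamma (κ / 2)‖ := norm_div _ _
    _ ≤ C * ‖((s + κ) / 2)⁻¹‖ / ‖Gamma (κ / 2)‖ := by
        gcongr
        exact hC _ hmem
    _ = C * 2 / ‖Gamma (κ / 2)‖ * ‖(s + κ)⁻¹‖ := by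
        rw [inv_div, div_eq_mul_inv 2, norm_mul, norm_ofNat]
        ring

lemma tendsto_gammaRatio_verticalStripInfty (ha : 0 < a + κ.re) (b : ℝ) :
    Tendsto (gammaRatio κ) (verticalStripInfty a b) (𝓝 0) := by
  obtain ⟨C, hC⟩ := exists_norm_gammaRatio_le ha b
  refine squeeze_zero_norm' (a := fun s ↦ C * ‖(s + κ)⁻¹‖) ?_ ?_
  · filter_upwards [mem_inf_of_right (mem_principal_self (re ⁻¹' Icc a b))] with s hs using hC s hs
  · simpa using (tendsto_inv_add_verticalStripInfty a b κ).norm.const_mul C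

lemma memLp_two_inv_ofReal_add_mul_I (hσ : σ ≠ 0) :
    MemLp (fun y : ℝ ↦ ((σ : ℂ) + y * I)⁻¹) 2 := by
  rw [memLp_two_iff_integrable_sq_norm (continuous_inv_ofReal_add_mul_I hσ).aestronglyMeasurable]
  refine ((integrable_inv_one_add_sq.comp_div hσ).const_mul (σ ^ 2)⁻¹).congr
    (Eventually.of_forall fun y ↦ ?_)
  dsimp only
  rw [norm_inv, inv_pow, Complex.sq_norm, normSq_add_mul_I, ← mul_inv]
  congr 1
  field_simp

lemma memLp_two_inv_vertical_add (hσ : σ + κ.re ≠ 0) :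
    MemLp (fun y : ℝ ↦ ((σ : ℂ) + y * I + κ)⁻¹) 2 := by
  convert (memLp_two_inv_ofReal_add_mul_I hσ).comp_measurePreserving
    (measurePreserving_add_right volume κ.im) using 2 with y
  congr 1
  apply Complex.ext <;> simp

lemma continuous_gammaRatio_vertical (hσ : 0 < σ + κ.re) :
    Continuous fun y : ℝ ↦ gammaRatio κ (σ + y * I) :=
  continuous_iff_continuousAt.2 fun y ↦
    ContinuousAt.comp (g := gammaRatio κ) (f := fun y : ℝ ↦ (σ : ℂ) + y * I)
      (differentiableAt_gammaRatio (by simpa using hσ)).continuousAt (by fun_prop)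

lemma memLp_two_gammaRatio_vertical (hσ : 0 < σ + κ.re) :
    MemLp (fun y : ℝ ↦ gammaRatio κ (σ + y * I)) 2 := by
  obtain ⟨C, hC⟩ := exists_norm_gammaRatio_le hσ σ
  exact (memLp_two_inv_vertical_add hσ.ne').of_le_mul
    (continuous_gammaRatio_vertical hσ).aestronglyMeasurable
    (Eventually.of_forall fun y ↦ hC _ (by simp))

lemma verticalIntegrable_inv_smul_gammaRatio_mul (hσ : σ ≠ 0) (hκ : 0 < σ + κ.re)
    (hκ' : 0 < σ + κ'.re) :
    VerticalIntegrable (fun s ↦ s⁻¹ • (gammaRatio κ s * gammaRatio κ' s)) σ := by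
  have hprod := (memLp_two_gammaRatio_vertical hκ).integrable_mul
    (memLp_two_gammaRatio_vertical hκ')
  refine hprod.bdd_smul |σ|⁻¹ (continuous_inv_ofReal_add_mul_I hσ).aestronglyMeasurable
    (Eventually.of_forall fun y ↦ ?_)
  rw [norm_inv]
  gcongr
  simpa using abs_re_le_norm ((σ : ℂ) + y * I)

lemma tendsto_inv_smul_gammaRatio_mul (ha : 0 < a + κ.re) (ha' : 0 < a + κ'.re) (b : ℝ) :
    Tendsto (fun s ↦ s⁻¹ • (gammaRatio κ s * gammaRatio κ' s)) (verticalStripInfty a b) (𝓝 0) := by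
  simpa using (tendsto_inv_add_verticalStripInfty a b 0).smul
    ((tendsto_gammaRatio_verticalStripInfty ha b).mul (tendsto_gammaRatio_verticalStripInfty ha' b))

theorem mellinInv_gammaRatio_sub_one (ha : a < 0) (hb : 0 < b) (hκ : 0 < a + κ.re)
    (hκ' : 0 < a + κ'.re) {x : ℝ} (hx : 0 < x) :
    mellinInv b (fun s ↦ s⁻¹ • (gammaRatio κ s * gammaRatio κ' s)) x - 1 =
      mellinInv a (fun s ↦ s⁻¹ • (gammaRatio κ s * gammaRatio κ' s)) x := by
  have hshift := mellinInv_inv_smul_sub ha hb hx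
    ((differentiableOn_gammaRatio hκ b).mul (differentiableOn_gammaRatio hκ' b))
    (tendsto_inv_smul_gammaRatio_mul hκ hκ' b)
    (verticalIntegrable_inv_smul_gammaRatio_mul ha.ne hκ hκ')
    (verticalIntegrable_inv_smul_gammaRatio_mul hb.ne' (by linarith) (by linarith))
  simp only [Pi.mul_apply, gammaRatio_zero (κ := κ) (by linarith),
    gammaRatio_zero (κ := κ') (by linarith), mul_one] at hshift
  rw [← hshift, sub_sub_cancel]

end GammaFactor

lemma V₂_eq_mellinInv (T x : ℝ) :
    V₂ T x = mellinInv 1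
      (fun s ↦ s⁻¹ • (gammaRatio (1 / 2 + T * I) s * gammaRatio (1 / 2 - T * I) s)) (π * x) := by
  have hnum (s : ℂ) : (2 * s + 1 + 2 * I * T) / 4 = (s + (1 / 2 + T * I)) / 2 := by ring
  have hnum' (s : ℂ) : (2 * s + 1 - 2 * I * T) / 4 = (s + (1 / 2 - T * I)) / 2 := by ring
  have hden : (1 + 2 * I * T) / 4 = (1 / 2 + T * I) / 2 := by ring
  have hden' : (1 - 2 * I * T) / 4 = (1 / 2 - T * I) / 2 := by ring
  simp only [V₂, mellinInv, gammaRatio, hnum, hnum', hden, hden', div_mul_div_comm, ofReal_one,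
    smul_eq_mul, real_smul]
  push_cast
  congr 2 with t
  ring

theorem stmt13_general (T : ℝ) (δ : ℝ) (hδ : δ ∈ Ioo 0 (1 / 2 : ℝ)) :
    ∃ K > 0, ∀ x : ℝ, 0 < x → ‖V₂ T x - 1‖ ≤ K * x ^ (1 / 2 - δ) := by
  set c := 1 / 2 - δ with hc
  have hc0 : -c < 0 := by linarith [hδ.2]
  have hre : 0 < -c + (1 / 2 + T * I : ℂ).re := by simpa [hc] using hδ.1
  have hre' : 0 < -c + (1 / 2 - T * I : ℂ).re := by simpa [hc] using hδ.1
  let F : ℂ → ℂ := fun s ↦ s⁻¹ • (gammaRatio (1 / 2 + T * I) s * gammaRatio (1 / 2 - T * I) s)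
  let J := (2 * π)⁻¹ * ∫ y : ℝ, ‖F ((-c : ℝ) + y * I)‖
  have hK : 0 < π ^ c * (J + 1) := by positivity
  refine ⟨π ^ c * (J + 1), hK, fun x hx ↦ ?_⟩
  have hπx : 0 < π * x := by positivity
  calc ‖V₂ T x - 1‖ = ‖mellinInv (-c) F (π * x)‖ := by
        rw [V₂_eq_mellinInv, mellinInv_gammaRatio_sub_one hc0 one_pos hre hre' hπx]
    _ ≤ (π * x) ^ c * J := by simpa only [neg_neg] using norm_mellinInv_le hπx (-c) F
    _ = π ^ c * J * x ^ c := by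
        rw [Real.mul_rpow Real.pi_nonneg hx.le]
        ring
    _ ≤ π ^ c * (J + 1) * x ^ c := by
        gcongr
        linarith

/-- **`V₂(x) ∼ 1` for small `x`.** Fix a real `T`. For every `δ ∈ (0, 1/2)` there is
`K > 0` such that `|V₂(x) - 1| ≤ K · x^{1/2 - δ}` for all `0 < x ≤ 1`. -/
theorem stmt13 (T : ℝ) (δ : ℝ) (hδ : δ ∈ Set.Ioo 0 (1 / 2 : ℝ)) :
    ∃ K > 0, ∀ x : ℝ, 0 < x → x ≤ 1 →
      ‖V₂ T x - 1‖ ≤ K * x ^ (1 / 2 - δ) := by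
  obtain ⟨K, hK, hbound⟩ := stmt13_general T δ hδ
  exact ⟨K, hK, fun x hx _ ↦ hbound x hx⟩
end
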